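/- arXiv:1110.1014 — 7 statements merged into one kernel-verified Lean document; each statement's English description precedes it below -/
import Mathlib

section
/- Let K be a d-dimensional maximal lattice-free set in ℝ^d and let r be the dimension of the recession cone rec(K). Then K is a polyhedron (an intersection of finitely many closed halfspaces) with at most 2^(d−r) facets. -/
open Pointwise

/-- The standard integer lattice `ℤ^d` viewed as a subset of `ℝ^d`. -/
def intLattice (d : ℕ) : Set (Fin d → ℝ) :=
  Set.range (fun z : Fin d → ℤ => fun i => (z i : ℝ))

/-- A set `K ⊆ ℝ^d` is lattice-free if it is closed, convex, and its interior
contains no point of `ℤ^d`. -/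
def IsLatticeFree (d : ℕ) (K : Set (Fin d → ℝ)) : Prop :=
  IsClosed K ∧ Convex ℝ K ∧ interior K ∩ intLattice d = ∅

/-- A lattice-free set is maximal if it is not properly contained in another
lattice-free set. -/
def IsMaxLatticeFree (d : ℕ) (K : Set (Fin d → ℝ)) : Prop :=
  IsLatticeFree d K ∧ ∀ K' : Set (Fin d → ℝ), IsLatticeFree d K' → K ⊆ K' → K' = K

/-- The recession cone of `K`: all vectors `u` with `K + u ⊆ K`. -/
def recCone (d : ℕ) (K : Set (Fin d → ℝ)) : Set (Fin d → ℝ) :=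
  {u | ∀ x ∈ K, x + u ∈ K}

/-- A polyhedron: an intersection of finitely many closed halfspaces. -/
def IsPolyhedron (d : ℕ) (K : Set (Fin d → ℝ)) : Prop :=
  ∃ (n : ℕ) (a : Fin n → (Fin d → ℝ)) (b : Fin n → ℝ),
    K = {x | ∀ i, ∑ j, a i j * x j ≤ b i}

/-- A polytope: the convex hull of finitely many points. -/
def IsPolytope (d : ℕ) (K : Set (Fin d → ℝ)) : Prop :=
  ∃ s : Finset (Fin d → ℝ), K = convexHull ℝ (s : Set (Fin d → ℝ))

/-- A facet of a `d`-dimensional convex set `K ⊆ ℝ^d`: a nonempty convex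
(extreme) face of dimension `d - 1`. -/
def IsFacet (d : ℕ) (K F : Set (Fin d → ℝ)) : Prop :=
  F.Nonempty ∧ IsExtreme ℝ K F ∧ Convex ℝ F ∧
    Module.finrank ℝ (affineSpan ℝ F).direction + 1 = d

/-!
The recession cone of a full-dimensional maximal lattice-free set `K` is a subspace: multiples `n u`
of a recession direction `u` return arbitrarily close to the lattice, so a lattice point in
`interior K + ℝ u` can be moved into `interior K`, and maximality makes `K` invariant under `ℝ u`.
Dividing by this subspace reduces to bounded `K`, at the price that the lattice is replaced by its
image, a priori only a spanning subgroup. It is nevertheless discrete, because otherwise its closure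
would contain a line along which `K` could be enlarged.

A bounded maximal `K` is cut out by a box and finitely many halfspaces supporting it at lattice
points of the box. If none of these is redundant, then each of them has a lattice point in the
relative interior of its facet, since otherwise it could be relaxed. Two such points that are
congruent modulo twice the lattice would have a lattice point of `interior K` as midpoint, so there
are at most `2 ^ rank` of them.
-/

open Filter Topology Bornology Module

section RecessionCone

section Module

variable {E : Type*} [AddCommGroup E] [Module ℝ E] {K : Set E} {u x : E}

/-- The recession cone of `K`. For arbitrary `K` it is only an additive monoid; when `K` is convex
it is also closed under nonnegative scaling. -/
def recessionCone (K : Set E) : AddSubmonoid E where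
  carrier := {u | ∀ x ∈ K, x + u ∈ K}
  zero_mem' := fun x hx => by rwa [add_zero]
  add_mem' := fun {u v} hu hv x hx => by rw [← add_assoc]; exact hv _ (hu x hx)

theorem add_natCast_smul_mem (hu : u ∈ recessionCone K) (hx : x ∈ K) (n : ℕ) :
    x + (n : ℝ) • u ∈ K := by
  rw [Nat.cast_smul_eq_nsmul]
  exact nsmul_mem hu n x hx

theorem smul_mem_recessionCone (hK : Convex ℝ K) (hu : u ∈ recessionCone K) {t : ℝ}
    (ht : 0 ≤ t) : t • u ∈ recessionCone K := by
  intro x hx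
  obtain ⟨n, hn⟩ := exists_nat_gt t
  have hn₀ : (0 : ℝ) < n := ht.trans_lt hn
  have hmem : x + (t / n) • (n : ℝ) • u ∈ K :=
    hK.add_smul_mem hx (add_natCast_smul_mem hu hx n) ⟨by positivity, (div_le_one hn₀).mpr hn.le⟩
  rwa [smul_smul, div_mul_cancel₀ t hn₀.ne'] at hmem

theorem mem_recessionCone_of_map_mem_image {F : Type*} [AddCommGroup F] [Module ℝ F]
    {π : E →ₗ[ℝ] F} (hsat : π ⁻¹' (π '' K) = K) (hu : π u ∈ recessionCone (π '' K)) :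
    u ∈ recessionCone K := by
  intro x hx
  rw [← hsat, Set.mem_preimage, map_add]
  exact hu _ (Set.mem_image_of_mem π hx)

end Module

variable {E : Type*} [NormedAddCommGroup E] {K : Set E}

theorem add_mem_interior {u x : E} (hu : u ∈ recessionCone K) (hx : x ∈ interior K) :
    x + u ∈ interior K := by
  refine interior_maximal ?_ isOpen_interior.add_right (Set.add_mem_add hx rfl : _ ∈ _ + {u})
  rintro _ ⟨y, hy, _, rfl, rfl⟩
  exact hu y (interior_subset hy)

variable [NormedSpace ℝ E]

theorem recessionCone_eq_bot_of_isBounded (hne : K.Nonempty) (hb : IsBounded K) :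
    recessionCone K = ⊥ := by
  obtain ⟨x, hx⟩ := hne
  refine (AddSubmonoid.eq_bot_iff_forall _).mpr fun u hu => ?_
  obtain ⟨r, hr⟩ := hb.subset_closedBall x
  by_contra hu₀
  obtain ⟨n, hn⟩ := exists_nat_gt (r / ‖u‖)
  have hle : n * ‖u‖ ≤ r := by
    simpa [norm_smul] using hr (add_natCast_smul_mem hu hx n)
  rw [div_lt_iff₀ (norm_pos_iff.mpr hu₀)] at hn
  exact hle.not_gt hn

theorem isBounded_of_recessionCone_eq_bot [FiniteDimensional ℝ E] (hconv : Convex ℝ K)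
    (hcl : IsClosed K) (h : recessionCone K = ⊥) : IsBounded K := by
  by_contra hb
  obtain ⟨v, hv₀, hv⟩ := not_bounded_iff_exists_ne_zero_mem_asymptoticCone.mp hb
  refine hv₀ ((AddSubmonoid.eq_bot_iff_forall _).mp h v fun x hx => ?_)
  have hmem := hconv.smul_vadd_mem_of_isClosed_of_mem_asymptoticCone (c := 1) hcl zero_le_one hv hx
  rwa [one_smul, vadd_eq_add, add_comm] at hmem

end RecessionCone

section Halfspaces

variable {E : Type*} [NormedAddCommGroup E] [NormedSpace ℝ E]
  {P : Set (StrongDual ℝ E × ℝ)} {p : StrongDual ℝ E × ℝ} {c : ℝ}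

/-- The intersection of the halfspaces `f x ≤ c` over the pairs `(f, c)` in `P`; it is a polyhedron
when `P` is finite. -/
def halfspaceInter (P : Set (StrongDual ℝ E × ℝ)) : Set E :=
  {x | ∀ p ∈ P, p.1 x ≤ p.2}

theorem mem_halfspaceInter {x : E} : x ∈ halfspaceInter P ↔ ∀ p ∈ P, p.1 x ≤ p.2 :=
  Iff.rfl

theorem halfspaceInter_eq_biInter (P : Set (StrongDual ℝ E × ℝ)) :
    halfspaceInter P = ⋂ p ∈ P, {x | p.1 x ≤ p.2} := by
  ext x
  simp [mem_halfspaceInter]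

theorem isClosed_halfspaceInter (P : Set (StrongDual ℝ E × ℝ)) : IsClosed (halfspaceInter P) := by
  rw [halfspaceInter_eq_biInter]
  exact isClosed_biInter fun p _ => isClosed_le p.1.continuous continuous_const

theorem convex_halfspaceInter (P : Set (StrongDual ℝ E × ℝ)) : Convex ℝ (halfspaceInter P) := by
  rw [halfspaceInter_eq_biInter]
  exact convex_iInter₂ fun p _ => convex_halfSpace_le p.1.toLinearMap.isLinear _

theorem interior_halfspaceInter (hP : P.Finite) (hP₀ : ∀ p ∈ P, p.1 ≠ 0) :
    interior (halfspaceInter P) = {x | ∀ p ∈ P, p.1 x < p.2} := by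
  refine Set.Subset.antisymm (fun x hx p hp => ?_)
    (interior_maximal (fun x hx p hp => (hx p hp).le) ?_)
  · refine lt_of_le_of_ne (interior_subset hx p hp) fun heq => hP₀ p hp ?_
    refine IsLocalMax.hasFDerivAt_eq_zero (a := x) ?_ p.1.hasFDerivAt
    filter_upwards [mem_interior_iff_mem_nhds.mp hx] with y hy
    exact (hy p hp).trans_eq heq.symm
  · simp only [Set.ofPred_forall]
    exact hP.isOpen_biInter fun p _ => isOpen_lt p.1.continuous continuous_const

theorem mem_recessionCone_halfspaceInter (hne : (halfspaceInter P).Nonempty) {u : E} :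
    u ∈ recessionCone (halfspaceInter P) ↔ ∀ p ∈ P, p.1 u ≤ 0 := by
  obtain ⟨x, hx⟩ := hne
  refine ⟨fun hu p hp => ?_, fun hu y hy p hp => ?_⟩
  · by_contra! hpos
    obtain ⟨n, hn⟩ := exists_nat_gt ((p.2 - p.1 x) / p.1 u)
    have hle : p.1 x + n * p.1 u ≤ p.2 := by
      simpa using add_natCast_smul_mem hu hx n p hp
    rw [div_lt_iff₀ hpos] at hn
    linarith
  · rw [map_add]
    linarith [hy p hp, hu p hp]

theorem exists_subset_halfspaceInter_eq_irredundant (hP : P.Finite) :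
    ∃ Q ⊆ P, halfspaceInter Q = halfspaceInter P ∧
      ∀ p ∈ Q, halfspaceInter (Q \ {p}) ≠ halfspaceInter Q := by
  obtain ⟨Q, ⟨hQP, hQ⟩, hmin⟩ := (hP.finite_subsets.subset
    (Set.sep_subset _ fun Q => halfspaceInter Q = halfspaceInter P)).exists_minimal
      ⟨P, Set.Subset.rfl, rfl⟩
  refine ⟨Q, hQP, hQ, fun p hp heq => ?_⟩
  exact (hmin ⟨Set.sdiff_subset.trans hQP, heq.trans hQ⟩ Set.sdiff_subset hp).2 rfl

theorem halfspaceInter_image_comp {F : Type*} [NormedAddCommGroup F] [NormedSpace ℝ F]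
    (P : Set (StrongDual ℝ F × ℝ)) (π : E →L[ℝ] F) :
    halfspaceInter ((fun p => (p.1.comp π, p.2)) '' P) = π ⁻¹' halfspaceInter P := by
  ext x
  exact Set.forall_mem_image

/-- The system obtained from `P` by changing the right-hand side of the constraint `p` to `c`. -/
def relaxConstraint (P : Set (StrongDual ℝ E × ℝ)) (p : StrongDual ℝ E × ℝ) (c : ℝ) :
    Set (StrongDual ℝ E × ℝ) :=
  insert (p.1, c) (P \ {p})

theorem mem_halfspaceInter_relaxConstraint {x : E} :
    x ∈ halfspaceInter (relaxConstraint P p c) ↔ p.1 x ≤ c ∧ x ∈ halfspaceInter (P \ {p}) :=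
  Set.forall_mem_insert

theorem finite_relaxConstraint (hP : P.Finite) : (relaxConstraint P p c).Finite :=
  hP.sdiff.insert _

theorem halfspaceInter_subset_relaxConstraint (hp : p ∈ P) (hc : p.2 ≤ c) :
    halfspaceInter P ⊆ halfspaceInter (relaxConstraint P p c) := fun _ hx =>
  mem_halfspaceInter_relaxConstraint.mpr ⟨(hx p hp).trans hc, fun q hq => hx q hq.1⟩

theorem exists_mem_lt_of_irredundant (h : halfspaceInter (P \ {p}) ≠ halfspaceInter P) :
    ∃ y ∈ halfspaceInter (P \ {p}), p.2 < p.1 y := by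
  by_contra! hle
  refine h (Set.Subset.antisymm (fun y hy q hq => ?_) fun y hy q hq => hy q hq.1)
  by_cases hqp : q = p
  · exact hqp ▸ hle y hy
  · exact hy q ⟨hq, hqp⟩

theorem halfspaceInter_relaxConstraint_ne (hne : (halfspaceInter P).Nonempty) (hp : p ∈ P)
    (h : halfspaceInter (P \ {p}) ≠ halfspaceInter P) (hc : p.2 < c) :
    halfspaceInter (relaxConstraint P p c) ≠ halfspaceInter P := by
  obtain ⟨x, hx⟩ := hne
  obtain ⟨y, hy, hpy⟩ := exists_mem_lt_of_irredundant h
  have hxp : p.1 x ≤ p.2 := hx p hp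
  obtain ⟨w, hw, hpw⟩ : min c (p.1 y) ∈ p.1 '' segment ℝ x y := by
    rw [show p.1 '' segment ℝ x y = segment ℝ (p.1 x) (p.1 y) from
      image_segment ℝ p.1.toLinearMap.toAffineMap x y, segment_eq_Icc (hxp.trans hpy.le)]
    exact ⟨le_min (hxp.trans hc.le) (hxp.trans hpy.le), min_le_right _ _⟩
  have hwP : w ∈ halfspaceInter (P \ {p}) :=
    (convex_halfspaceInter _).segment_subset (fun q hq => hx q hq.1) hy hw
  intro heq
  have hwp : p.1 w ≤ p.2 :=
    heq.subset (mem_halfspaceInter_relaxConstraint.mpr ⟨hpw.trans_le (min_le_left _ _), hwP⟩) p hp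
  exact hwp.not_gt (hpw ▸ lt_min hc hpy)

section FiniteDimensional

variable [FiniteDimensional ℝ E]

theorem isBounded_halfspaceInter_relaxConstraint (hne : (halfspaceInter P).Nonempty)
    (hb : IsBounded (halfspaceInter P)) (hp : p ∈ P) (hc : p.2 ≤ c) :
    IsBounded (halfspaceInter (relaxConstraint P p c)) := by
  refine isBounded_of_recessionCone_eq_bot (convex_halfspaceInter _) (isClosed_halfspaceInter _) ?_
  rw [← recessionCone_eq_bot_of_isBounded hne hb]
  ext u
  rw [mem_recessionCone_halfspaceInter hne,
    mem_recessionCone_halfspaceInter (hne.mono (halfspaceInter_subset_relaxConstraint hp hc)),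
    relaxConstraint, Set.forall_mem_insert]
  conv_rhs => rw [← Set.insert_sdiff_self_of_mem hp, Set.forall_mem_insert]

theorem exists_superset_isBounded_halfspaceInter {B : Set E} (hB : IsBounded B) :
    ∃ P : Set (StrongDual ℝ E × ℝ), P.Finite ∧ (∀ p ∈ P, p.1 ≠ 0) ∧ B ⊆ halfspaceInter P ∧
      IsBounded (halfspaceInter P) := by
  let b := finBasis ℝ E
  let e : E ≃L[ℝ] (Fin (finrank ℝ E) → ℝ) := b.equivFunL
  let coord (i : Fin (finrank ℝ E)) : StrongDual ℝ E :=
    (ContinuousLinearMap.proj i).comp (e : E →L[ℝ] Fin _ → ℝ)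
  have hcoord (i) : coord i ≠ 0 := fun h => by
    simpa [coord, e] using DFunLike.congr_fun h (b i)
  have heB : IsBounded (e '' B) := e.lipschitz.isBounded_image hB
  obtain ⟨⟨l, hl⟩, ⟨m, hm⟩⟩ := isBounded_iff_bddBelow_bddAbove.mp heB
  let P := Set.range (fun i => (coord i, m i)) ∪ Set.range (fun i => (-coord i, -l i))
  have hP : halfspaceInter P = e ⁻¹' Set.Icc l m := by
    ext x
    simp [P, mem_halfspaceInter, Set.mem_union, or_imp, forall_and, coord, Pi.le_def, and_comm]
  refine ⟨P, (Set.finite_range _).union (Set.finite_range _), ?_, ?_, ?_⟩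
  · rintro _ (⟨i, rfl⟩ | ⟨i, rfl⟩)
    exacts [hcoord i, neg_ne_zero.mpr (hcoord i)]
  · rw [hP, ← Set.image_subset_iff]
    exact fun y hy => ⟨hl hy, hm hy⟩
  · rw [hP]
    exact e.antilipschitz.isBounded_preimage (Metric.isBounded_Icc l m)

end FiniteDimensional

end Halfspaces

section Faces

variable {E : Type*} [NormedAddCommGroup E] [NormedSpace ℝ E]

theorem exists_mem_openSegment_of_mem_intrinsicInterior {F : Set E} {y z : E}
    (hz : z ∈ intrinsicInterior ℝ F) (hy : y ∈ affineSpan ℝ F) :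
    ∃ w ∈ F, z ∈ openSegment ℝ y w := by
  obtain ⟨z, hz₀, rfl⟩ := mem_intrinsicInterior.mp hz
  let line (t : ℝ) : affineSpan ℝ F :=
    ⟨AffineMap.lineMap y (z : E) t, AffineMap.lineMap_mem t hy z.2⟩
  have hcont : Continuous line := AffineMap.lineMap_continuous.subtype_mk _
  have hline : ∀ᶠ t in 𝓝 1, line t ∈ interior ((↑) ⁻¹' F) :=
    hcont.continuousAt.eventually_mem (isOpen_interior.mem_nhds (by simpa [line] using hz₀))
  obtain ⟨t, ht, ht₁⟩ : ∃ t, line t ∈ interior ((↑) ⁻¹' F) ∧ 1 < t :=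
    ((hline.filter_mono nhdsWithin_le_nhds).and (self_mem_nhdsWithin (s := Set.Ioi 1))).exists
  have hw : AffineMap.lineMap y (z : E) t ∈ F := interior_subset (s := Subtype.val ⁻¹' F) ht
  refine ⟨AffineMap.lineMap y (z : E) t, hw, ?_⟩
  rw [openSegment_eq_image_lineMap]
  refine ⟨t⁻¹, ⟨by positivity, inv_lt_one_of_one_lt₀ ht₁⟩, ?_⟩
  rw [AffineMap.lineMap_lineMap_right, inv_mul_cancel₀ (by positivity), AffineMap.lineMap_apply_one]

theorem eq_of_isExtreme_of_mem_interior {K F : Set E} {z : E} (hF : IsExtreme ℝ K F) (hzF : z ∈ F)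
    (hzK : z ∈ interior K) : F = K := by
  refine hF.subset.antisymm fun y hy => ?_
  obtain ⟨w, hw, hz⟩ := exists_mem_openSegment_of_mem_intrinsicInterior
    (interior_subset_intrinsicInterior hzK) (subset_affineSpan ℝ K hy)
  exact hF.left_mem_of_mem_openSegment hy hw hzF hz

variable [FiniteDimensional ℝ E]

theorem inter_affineSpan_of_isExtreme {K F : Set E} (hF : IsExtreme ℝ K F) (hconv : Convex ℝ F)
    (hne : F.Nonempty) : K ∩ affineSpan ℝ F = F := by
  refine Set.Subset.antisymm ?_ (Set.subset_inter hF.subset (subset_affineSpan ℝ F))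
  rintro y ⟨hyK, hy⟩
  obtain ⟨z, hz⟩ := hne.intrinsicInterior hconv
  obtain ⟨w, hw, hzyw⟩ := exists_mem_openSegment_of_mem_intrinsicInterior hz hy
  exact hF.left_mem_of_mem_openSegment hyK (hF.subset hw) (intrinsicInterior_subset hz) hzyw

/-- The facets of a full-dimensional convex set `K`: its nonempty convex faces of codimension
`1`. -/
def facets (K : Set E) : Set (Set E) :=
  {F | F.Nonempty ∧ IsExtreme ℝ K F ∧ Convex ℝ F ∧
    finrank ℝ (affineSpan ℝ F).direction + 1 = finrank ℝ E}

theorem notMem_interior_of_mem_facets {K F : Set E} (hF : F ∈ facets K) {z : E} (hz : z ∈ F) :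
    z ∉ interior K := by
  intro hzK
  obtain ⟨-, hext, hconv, hrank⟩ := hF
  obtain rfl := eq_of_isExtreme_of_mem_interior hext hz hzK
  rw [hconv.interior_nonempty_iff_affineSpan_eq_top.mp ⟨z, hzK⟩, AffineSubspace.direction_top,
    finrank_top] at hrank
  omega

theorem affineSpan_direction_eq_ker_of_eqOn {F : Set E} {f : StrongDual ℝ E} {c : ℝ} (hf : f ≠ 0)
    (hfF : ∀ x ∈ F, f x = c) (hrank : finrank ℝ (affineSpan ℝ F).direction + 1 = finrank ℝ E) :
    (affineSpan ℝ F).direction = LinearMap.ker f.toLinearMap := by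
  refine Submodule.eq_of_le_of_finrank_eq ?_ ?_
  · rw [direction_affineSpan, vectorSpan_def, Submodule.span_le]
    rintro _ ⟨x, hx, y, hy, rfl⟩
    simp [hfF x hx, hfF y hy]
  · have hf' : f.toLinearMap ≠ 0 := fun h => hf (ContinuousLinearMap.coe_injective h)
    have := Module.Dual.finrank_ker_add_one_of_ne_zero hf'
    omega

variable {P : Set (StrongDual ℝ E × ℝ)}

theorem exists_eq_inter_of_mem_facets_halfspaceInter (hP : P.Finite) (hP₀ : ∀ p ∈ P, p.1 ≠ 0)
    {F : Set E} (hF : F ∈ facets (halfspaceInter P)) :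
    ∃ p ∈ P, halfspaceInter P ∩ {x | p.1 x = p.2} = F := by
  have ⟨hne, hext, hconv, hrank⟩ := hF
  obtain ⟨z, hz⟩ := hne.intrinsicInterior hconv
  have hzF : z ∈ F := intrinsicInterior_subset hz
  obtain ⟨p, hp, hpz⟩ : ∃ p ∈ P, p.2 ≤ p.1 z := by
    simpa [interior_halfspaceInter hP hP₀] using notMem_interior_of_mem_facets hF hzF
  have hpF : ∀ y ∈ F, p.1 y = p.2 := by
    intro y hy
    obtain ⟨w, hw, a, b, ha, hb, hab, rfl⟩ :=
      exists_mem_openSegment_of_mem_intrinsicInterior hz (subset_affineSpan ℝ F hy)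
    have hpy : p.1 y ≤ p.2 := hext.subset hy p hp
    have hpw : p.1 w ≤ p.2 := hext.subset hw p hp
    simp only [map_add, map_smul, smul_eq_mul] at hpz
    obtain rfl : b = 1 - a := eq_sub_of_add_eq' hab
    refine hpy.antisymm (le_of_mul_le_mul_left ?_ ha)
    linarith [mul_le_mul_of_nonneg_left hpw hb.le]
  refine ⟨p, hp, ?_⟩
  rw [← inter_affineSpan_of_isExtreme hext hconv hne]
  congr 1
  ext y
  rw [SetLike.mem_coe,
    ← AffineSubspace.vsub_right_mem_direction_iff_mem (subset_affineSpan ℝ F hzF),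
    affineSpan_direction_eq_ker_of_eqOn (hP₀ p hp) hpF hrank]
  simp [hpF z hzF, sub_eq_zero]

theorem facets_halfspaceInter_subset (hP : P.Finite) (hP₀ : ∀ p ∈ P, p.1 ≠ 0) :
    facets (halfspaceInter P) ⊆ (fun p => halfspaceInter P ∩ {x | p.1 x = p.2}) '' P := fun _ hF =>
  exists_eq_inter_of_mem_facets_halfspaceInter hP hP₀ hF

end Faces

section Lattice

variable {E : Type*} [NormedAddCommGroup E] [NormedSpace ℝ E] [FiniteDimensional ℝ E]
  {Λ : Submodule ℤ E}

theorem exists_smul_mem_closure_of_not_discreteTopology (hΛ : ¬ DiscreteTopology Λ) :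
    ∃ v : E, v ≠ 0 ∧ ∀ t : ℝ, t • v ∈ closure (Λ : Set E) := by
  have hne : (𝓝[≠] (0 : Λ)).NeBot := by
    rw [neBot_iff, Ne, ← isOpen_singleton_iff_punctured_nhds]
    exact mt discreteTopology_of_isOpen_singleton_zero hΛ
  let l : Filter Λ := Ultrafilter.of (𝓝[≠] (0 : Λ))
  have hl : l ≤ 𝓝[≠] 0 := Ultrafilter.of_le _
  have hl₀ : ∀ᶠ w : Λ in l, ‖(w : E)‖ ≠ 0 := by
    filter_upwards [hl self_mem_nhdsWithin] with w hw
    simpa using hw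
  have hsphere : ∀ᶠ w : Λ in l, ‖(w : E)‖⁻¹ • (w : E) ∈ Metric.sphere 0 1 := by
    filter_upwards [hl₀] with w hw
    simp [norm_smul, hw]
  have hinv : Tendsto (fun w : Λ => ‖(w : E)‖⁻¹) l atTop :=
    tendsto_inv_nhdsGT_zero.comp ((tendsto_norm_nhdsNE_zero (E := Λ)).mono_left hl)
  obtain ⟨v, hv, hlim⟩ := (isCompact_sphere (0 : E) 1).ultrafilter_le_nhds'
    ((Ultrafilter.of (𝓝[≠] (0 : Λ))).map fun w : Λ => ‖(w : E)‖⁻¹ • (w : E)) hsphere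
  have hnonneg : ∀ t : ℝ, 0 ≤ t → t • v ∈ closure (Λ : Set E) := by
    intro t ht
    refine mem_closure_of_tendsto
      (((tendsto_nat_floor_mul_div_atTop ht).comp hinv).smul hlim) ?_
    filter_upwards [hl₀] with w hw
    have : (⌊t * ‖(w : E)‖⁻¹⌋₊ / ‖(w : E)‖⁻¹) • ‖(w : E)‖⁻¹ • (w : E)
        = ⌊t * ‖(w : E)‖⁻¹⌋₊ • (w : E) := by
      rw [smul_smul, div_mul_cancel₀ _ (inv_ne_zero hw), Nat.cast_smul_eq_nsmul]
    exact this ▸ nsmul_mem w.2 _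
  refine ⟨v, Metric.ne_of_mem_sphere hv one_ne_zero, fun t => ?_⟩
  rcases le_total 0 t with ht | ht
  · exact hnonneg t ht
  · rw [← neg_neg (t • v), ← neg_smul]
    exact Λ.toAddSubgroup.topologicalClosure.neg_mem (hnonneg (-t) (neg_nonneg.mpr ht))

theorem frequently_exists_norm_smul_sub_lt (hΛ : Submodule.span ℝ (Λ : Set E) = ⊤) (u : E) {ε : ℝ}
    (hε : 0 < ε) : ∃ᶠ n : ℕ in atTop, ∃ w ∈ Λ, ‖(n : ℝ) • u - w‖ < ε := by
  let b := Basis.ofSpan hΛ.ge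
  have hbΛ : Submodule.span ℤ (Set.range b) ≤ Λ := Submodule.span_le.mpr (Basis.ofSpan_subset hΛ.ge)
  let rem (n : ℕ) : E := ZSpan.fract b ((n : ℝ) • u)
  have hrem (n : ℕ) : rem n ∈ Metric.closedBall 0 (∑ i, ‖b i‖) :=
    mem_closedBall_zero_iff.mpr (ZSpan.norm_fract_le b _)
  obtain ⟨a, -, φ, hφ, hlim⟩ := tendsto_subseq_of_bounded Metric.isBounded_closedBall hrem
  obtain ⟨k, hk⟩ := Metric.cauchySeq_iff.mp hlim.cauchySeq ε hε
  refine frequently_atTop.mpr fun N => ?_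
  have hgap : N + φ k ≤ φ (N + k) := hφ.add_le_nat N k
  have hlt : ‖rem (φ (N + k)) - rem (φ k)‖ < ε := by
    simpa [dist_eq_norm] using hk (N + k) (Nat.le_add_left k N) k le_rfl
  refine ⟨φ (N + k) - φ k, Nat.le_sub_of_add_le hgap,
    ZSpan.floor b ((φ (N + k) : ℝ) • u) - ZSpan.floor b ((φ k : ℝ) • u),
    sub_mem (hbΛ (SetLike.coe_mem _)) (hbΛ (SetLike.coe_mem _)), ?_⟩
  rwa [Nat.cast_sub (le_of_add_le_right hgap), sub_smul, sub_sub_sub_comm]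

theorem finite_inter_of_isBounded [DiscreteTopology Λ] {B : Set E} (hB : IsBounded B) :
    (B ∩ (Λ : Set E)).Finite :=
  Metric.finite_isBounded_inter_isClosed DiscreteTopology.isDiscrete hB
    (AddSubgroup.isClosed_of_discrete (H := Λ.toAddSubgroup))

end Lattice

theorem card_le_two_pow_finrank_of_add_ne_two_zsmul {G ι : Type*} [AddCommGroup G]
    [Module.Free ℤ G] [Module.Finite ℤ G] {z : ι → G}
    (hz : ∀ i j, i ≠ j → ∀ w, z i + z j ≠ (2 : ℤ) • w) : Nat.card ι ≤ 2 ^ finrank ℤ G := by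
  rw [← ModN.natCard_eq]
  refine Nat.card_le_card_of_injective (fun i => ModN.mkQ 2 (z i)) fun i j hij => ?_
  by_contra hne
  have hij' : ModN.mkQ 2 (z i) = ModN.mkQ 2 (z j) := hij
  rw [← sub_eq_zero, ← map_sub] at hij'
  obtain ⟨w, hw⟩ := (Submodule.Quotient.mk_eq_zero _).mp hij'
  exact hz i j hne (w + z j) <| by
    rw [smul_add, show (2 : ℤ) • w = z i - z j from hw]; abel

section MaximalFree

variable {E : Type*} [NormedAddCommGroup E] [NormedSpace ℝ E] {Λ K : Set E}

/-- Closed convex sets without points of `Λ` in their interior; `Λ` stands for a lattice, but is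
allowed to be any set. -/
structure IsConvexFree (Λ K : Set E) : Prop where
  isClosed : IsClosed K
  convex : Convex ℝ K
  disjoint : Disjoint (interior K) Λ

theorem IsConvexFree.eventually_relaxConstraint {P : Set (StrongDual ℝ E × ℝ)}
    {p : StrongDual ℝ E × ℝ} (h : IsConvexFree Λ (halfspaceInter P)) (hP : P.Finite)
    (hP₀ : ∀ p ∈ P, p.1 ≠ 0) (hp : p ∈ P)
    (hfin : (halfspaceInter (relaxConstraint P p (p.2 + 1)) ∩ Λ).Finite)
    (hno : ∀ z ∈ Λ, p.1 z = p.2 → ∃ q ∈ P \ {p}, q.2 ≤ q.1 z) :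
    ∀ᶠ c in 𝓝[>] p.2, IsConvexFree Λ (halfspaceInter (relaxConstraint P p c)) := by
  have hbelow : ∀ᶠ c in 𝓝 p.2, ∀ z ∈ halfspaceInter (relaxConstraint P p (p.2 + 1)) ∩ Λ,
      p.2 < p.1 z → c < p.1 z :=
    (eventually_all_finite hfin).mpr fun z _ => eventually_imp_distrib_left.mpr eventually_lt_nhds
  filter_upwards [nhdsWithin_le_nhds hbelow,
    nhdsWithin_le_nhds (eventually_lt_nhds (lt_add_one p.2))] with c hc hc₁
  refine ⟨isClosed_halfspaceInter _, convex_halfspaceInter _, ?_⟩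
  have hrelax₀ : ∀ q ∈ relaxConstraint P p c, q.1 ≠ 0 :=
    Set.forall_mem_insert.mpr ⟨hP₀ p hp, fun q hq => hP₀ q hq.1⟩
  rw [interior_halfspaceInter (finite_relaxConstraint hP) hrelax₀, Set.disjoint_left]
  intro z hz hzΛ
  obtain ⟨hzc, hzP⟩ := Set.forall_mem_insert.mp hz
  rcases lt_trichotomy (p.1 z) p.2 with hlt | heq | hgt
  · refine h.disjoint.notMem_of_mem_right hzΛ ?_
    rw [interior_halfspaceInter hP hP₀, ← Set.insert_sdiff_self_of_mem hp]
    exact Set.forall_mem_insert.mpr ⟨hlt, hzP⟩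
  · obtain ⟨q, hq, hqz⟩ := hno z hzΛ heq
    exact (hzP q hq).not_ge hqz
  · have hz₁ : z ∈ halfspaceInter (relaxConstraint P p (p.2 + 1)) :=
      mem_halfspaceInter_relaxConstraint.mpr ⟨(hzc.trans hc₁).le, fun q hq => (hzP q hq).le⟩
    exact (hc z ⟨hz₁, hzΛ⟩ hgt).not_gt hzc

/-- Inclusion-maximal closed convex sets without points of `Λ` in their interior. -/
structure IsMaximalFree (Λ K : Set E) : Prop extends IsConvexFree Λ K where
  eq_of_subset : ∀ K' : Set E, IsConvexFree Λ K' → K ⊆ K' → K' = K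

namespace IsMaximalFree

theorem le_recessionCone (h : IsMaximalFree Λ K) (hne : (interior K).Nonempty)
    {M : Submodule ℝ E} (hM : Disjoint (interior K + (M : Set E)) Λ) :
    M.toAddSubmonoid ≤ recessionCone K := by
  have hopen : IsOpen (interior K + (M : Set E)) := isOpen_interior.add_right
  have hconv : Convex ℝ (interior K + (M : Set E)) := h.convex.interior.add M.convex
  have hsub : interior K ⊆ interior K + (M : Set E) := Set.subset_add_left _ M.zero_mem
  have hK : K ⊆ closure (interior K) := by
    rw [h.convex.closure_interior_eq_closure_of_nonempty_interior hne]
    exact subset_closure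
  have hint : interior (closure (interior K + (M : Set E))) = interior K + (M : Set E) := by
    rw [hconv.interior_closure_eq_interior_of_nonempty_interior, hopen.interior_eq]
    exact hopen.interior_eq.symm ▸ hne.mono hsub
  have heq : closure (interior K + (M : Set E)) = K :=
    h.eq_of_subset _ ⟨isClosed_closure, hconv.closure, hint.symm ▸ hM⟩
      (hK.trans (closure_mono hsub))
  intro u hu x hx
  rw [← heq]
  exact map_mem_closure (f := (· + u)) (continuous_add_const u) (hK hx)
    fun y hy => Set.add_mem_add hy hu

theorem image {F : Type*} [NormedAddCommGroup F] [NormedSpace ℝ F] (h : IsMaximalFree Λ K)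
    {π : E →L[ℝ] F} (hπ : IsOpenQuotientMap π) (hsat : π ⁻¹' (π '' K) = K) :
    IsMaximalFree (π '' Λ) (π '' K) where
  isClosed := hπ.isQuotientMap.isClosed_preimage.mp (hsat.symm ▸ h.isClosed)
  convex := h.convex.linear_image π.toLinearMap
  disjoint := by
    rw [Set.disjoint_image_right, hπ.isOpenMap.preimage_interior_eq_interior_preimage π.continuous,
      hsat]
    exact h.disjoint
  eq_of_subset K' hK' hsub := by
    have hfree : IsConvexFree Λ (π ⁻¹' K') := by
      refine ⟨hK'.isClosed.preimage π.continuous, hK'.convex.linear_preimage π.toLinearMap, ?_⟩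
      rw [← hπ.isOpenMap.preimage_interior_eq_interior_preimage π.continuous,
        ← Set.disjoint_image_right]
      exact hK'.disjoint
    rw [← h.eq_of_subset _ hfree (Set.image_subset_iff.mp hsub),
      Set.image_preimage_eq _ hπ.surjective]

variable [FiniteDimensional ℝ E]

theorem discreteTopology {Λ : Submodule ℤ E} (h : IsMaximalFree (Λ : Set E) K)
    (hne : (interior K).Nonempty) (hb : IsBounded K) : DiscreteTopology Λ := by
  by_contra hdisc
  obtain ⟨v, hv₀, hv⟩ := exists_smul_mem_closure_of_not_discreteTopology hdisc
  have hdisj : Disjoint (interior K + ((ℝ ∙ v : Submodule ℝ E) : Set E)) (Λ : Set E) := by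
    rw [Set.disjoint_left]
    rintro _ ⟨x, hx, u, hu, rfl⟩ hxu
    obtain ⟨t, rfl⟩ := Submodule.mem_span_singleton.mp hu
    have hxΛ : x ∈ closure (Λ : Set E) := by
      rw [← add_sub_cancel_right x (t • v)]
      exact Λ.toAddSubgroup.topologicalClosure.sub_mem (subset_closure hxu) (hv t)
    exact (h.disjoint.closure_right isOpen_interior).notMem_of_mem_left hx hxΛ
  have hle := h.le_recessionCone hne hdisj
  rw [recessionCone_eq_bot_of_isBounded (hne.mono interior_subset) hb] at hle
  exact hv₀ (hle (Submodule.mem_span_singleton_self v))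

theorem span_recessionCone_le {Λ : Submodule ℤ E} (hΛ : Submodule.span ℝ (Λ : Set E) = ⊤)
    (h : IsMaximalFree (Λ : Set E) K) (hne : (interior K).Nonempty) :
    (Submodule.span ℝ (recessionCone K : Set E)).toAddSubmonoid ≤ recessionCone K := by
  have hline : ∀ u ∈ recessionCone K, (ℝ ∙ u).toAddSubmonoid ≤ recessionCone K := by
    intro u hu
    refine h.le_recessionCone hne ?_
    rw [Set.disjoint_left]
    rintro _ ⟨y, hy, v, hv, rfl⟩ hyv
    obtain ⟨c, rfl⟩ := Submodule.mem_span_singleton.mp hv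
    obtain ⟨ε, hε, hball⟩ := Metric.isOpen_iff.mp isOpen_interior y hy
    obtain ⟨n, ⟨w, hw, hnw⟩, hn⟩ := ((frequently_exists_norm_smul_sub_lt hΛ u hε).and_eventually
      (tendsto_natCast_atTop_atTop.eventually_ge_atTop (-c))).exists
    have hnear : y + (w - (n : ℝ) • u) ∈ interior K :=
      hball (by rwa [mem_ball_iff_norm, add_sub_cancel_left, norm_sub_rev])
    have hmem := add_mem_interior
      (smul_mem_recessionCone h.convex hu (neg_le_iff_add_nonneg.mp hn)) hnear
    refine h.disjoint.notMem_of_mem_left hmem ?_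
    rw [show y + (w - (n : ℝ) • u) + ((n : ℝ) + c) • u = y + c • u + w by module]
    exact Λ.add_mem hyv hw
  intro v hv
  induction hv using Submodule.span_induction with
  | mem _ hv => exact hv
  | zero => exact zero_mem _
  | add v w _ _ hv hw => exact add_mem hv hw
  | smul c v _ hv => exact hline v hv (Submodule.smul_mem _ c (Submodule.mem_span_singleton_self v))

theorem exists_halfspaceInter (h : IsMaximalFree Λ K) (hne : (interior K).Nonempty)
    (hb : IsBounded K) (hΛ : ∀ B : Set E, IsBounded B → (B ∩ Λ).Finite) :
    ∃ P : Set (StrongDual ℝ E × ℝ), P.Finite ∧ (∀ p ∈ P, p.1 ≠ 0) ∧ K = halfspaceInter P := by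
  obtain ⟨P, hP, hP₀, hKP, hPb⟩ := exists_superset_isBounded_halfspaceInter hb
  have hsupp : ∀ z ∈ Λ, ∃ f : StrongDual ℝ E, f ≠ 0 ∧ ∀ x ∈ K, f x ≤ f z := fun z hz =>
    geometric_hahn_banach_of_nonempty_interior_point h.convex
      (h.disjoint.notMem_of_mem_right hz) hne
  choose! f hf₀ hf using hsupp
  let Q := P ∪ (fun z => (f z, f z z)) '' (halfspaceInter P ∩ Λ)
  have hQ : Q.Finite := hP.union ((hΛ _ hPb).image _)
  have hQ₀ : ∀ p ∈ Q, p.1 ≠ 0 := by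
    rintro _ (hp | ⟨z, hz, rfl⟩)
    exacts [hP₀ _ hp, hf₀ z hz.2]
  have hfree : IsConvexFree Λ (halfspaceInter Q) := by
    refine ⟨isClosed_halfspaceInter Q, convex_halfspaceInter Q, ?_⟩
    rw [interior_halfspaceInter hQ hQ₀, Set.disjoint_left]
    intro z hzQ hz
    have hzP : z ∈ halfspaceInter P := fun p hp => (hzQ p (.inl hp)).le
    exact (hzQ _ (.inr ⟨z, ⟨hzP, hz⟩, rfl⟩)).false
  refine ⟨Q, hQ, hQ₀, (h.eq_of_subset _ hfree ?_).symm⟩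
  rintro x hx _ (hp | ⟨z, hz, rfl⟩)
  exacts [hKP hx _ hp, hf z hz.2 x hx]

theorem exists_mem_eq_of_irredundant {P : Set (StrongDual ℝ E × ℝ)} {p : StrongDual ℝ E × ℝ}
    (h : IsMaximalFree Λ (halfspaceInter P)) (hP : P.Finite) (hP₀ : ∀ p ∈ P, p.1 ≠ 0)
    (hne : (halfspaceInter P).Nonempty) (hb : IsBounded (halfspaceInter P))
    (hΛ : ∀ B : Set E, IsBounded B → (B ∩ Λ).Finite) (hp : p ∈ P)
    (hirr : halfspaceInter (P \ {p}) ≠ halfspaceInter P) :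
    ∃ z ∈ Λ, p.1 z = p.2 ∧ ∀ q ∈ P \ {p}, q.1 z < q.2 := by
  by_contra! hno
  have hfin : (halfspaceInter (relaxConstraint P p (p.2 + 1)) ∩ Λ).Finite :=
    hΛ _ (isBounded_halfspaceInter_relaxConstraint hne hb hp (lt_add_one p.2).le)
  obtain ⟨c, hfree, hc⟩ := ((h.eventually_relaxConstraint hP hP₀ hp hfin hno).and
    (self_mem_nhdsWithin (s := Set.Ioi p.2))).exists
  exact halfspaceInter_relaxConstraint_ne hne hp hirr hc
    (h.eq_of_subset _ hfree (halfspaceInter_subset_relaxConstraint hp (le_of_lt hc)))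

end IsMaximalFree

end MaximalFree

section FacetBound

variable {E : Type*} [NormedAddCommGroup E] [NormedSpace ℝ E] [FiniteDimensional ℝ E]
  {Λ : Submodule ℤ E} {K : Set E}

theorem ncard_le_two_pow_finrank_of_irredundant [DiscreteTopology Λ] [IsZLattice ℝ Λ]
    {P : Set (StrongDual ℝ E × ℝ)} (h : IsMaximalFree (Λ : Set E) (halfspaceInter P))
    (hP : P.Finite) (hP₀ : ∀ p ∈ P, p.1 ≠ 0) (hne : (halfspaceInter P).Nonempty)
    (hb : IsBounded (halfspaceInter P))
    (hirr : ∀ p ∈ P, halfspaceInter (P \ {p}) ≠ halfspaceInter P) :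
    P.ncard ≤ 2 ^ finrank ℝ E := by
  choose z hzΛ hz_eq hz_lt using fun p : P => h.exists_mem_eq_of_irredundant hP hP₀ hne hb
    (fun _ => finite_inter_of_isBounded) p.2 (hirr p p.2)
  have hz_le (p : P) (q) (hq : q ∈ P) : q.1 (z p) ≤ q.2 := by
    by_cases hqp : q = p
    · exact hqp ▸ (hz_eq p).le
    · exact (hz_lt p q ⟨hq, hqp⟩).le
  have := ZLattice.module_free ℝ Λ
  have := ZLattice.module_finite ℝ Λ
  rw [← Nat.card_coe_set_eq, ← ZLattice.rank ℝ Λ]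
  refine card_le_two_pow_finrank_of_add_ne_two_zsmul (z := fun p => ⟨z p, hzΛ p⟩)
    fun i j hij w hw => h.disjoint.notMem_of_mem_right w.2 ?_
  have hw' : z i + z j = (2 : ℝ) • (w : E) := by
    simpa [two_smul] using congrArg Subtype.val hw
  rw [interior_halfspaceInter hP hP₀]
  intro q hq
  have hsum : q.1 (z i) + q.1 (z j) = 2 * q.1 w := by
    simpa using congrArg q.1 hw'
  by_cases hqi : q = i
  · have hqj : q ≠ j := fun hqj => hij (Subtype.ext (hqi.symm.trans hqj))
    linarith [hz_le i q hq, hz_lt j q ⟨hq, hqj⟩]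
  · linarith [hz_lt i q ⟨hq, hqi⟩, hz_le j q hq]

namespace IsMaximalFree

theorem exists_halfspaceInter_ncard_le_of_isBounded
    (hΛ : Submodule.span ℝ (Λ : Set E) = ⊤) (h : IsMaximalFree (Λ : Set E) K)
    (hne : (interior K).Nonempty) (hb : IsBounded K) :
    ∃ P : Set (StrongDual ℝ E × ℝ), P.Finite ∧ (∀ p ∈ P, p.1 ≠ 0) ∧ K = halfspaceInter P ∧
      P.ncard ≤ 2 ^ finrank ℝ E := by
  have := h.discreteTopology hne hb
  have : IsZLattice ℝ Λ := ⟨hΛ⟩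
  obtain ⟨Q, hQ, hQ₀, rfl⟩ := h.exists_halfspaceInter hne hb fun _ => finite_inter_of_isBounded
  obtain ⟨P, hPQ, hPK, hirr⟩ := exists_subset_halfspaceInter_eq_irredundant hQ
  have hP := hQ.subset hPQ
  have hP₀ := fun p hp => hQ₀ p (hPQ hp)
  rw [← hPK] at h hne hb ⊢
  exact ⟨P, hP, hP₀, rfl, ncard_le_two_pow_finrank_of_irredundant h hP hP₀
    (hne.mono interior_subset) hb hirr⟩

theorem exists_halfspaceInter_ncard_le (hΛ : Submodule.span ℝ (Λ : Set E) = ⊤)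
    (h : IsMaximalFree (Λ : Set E) K) (hne : (interior K).Nonempty) :
    ∃ P : Set (StrongDual ℝ E × ℝ), P.Finite ∧ (∀ p ∈ P, p.1 ≠ 0) ∧ K = halfspaceInter P ∧
      P.ncard ≤ 2 ^ (finrank ℝ E - finrank ℝ (Submodule.span ℝ (recessionCone K : Set E))) := by
  let L := Submodule.span ℝ (recessionCone K : Set E)
  have : IsClosed (L : Set E) := L.closed_of_finiteDimensional
  let π : E →L[ℝ] E ⧸ L := L.mkQL
  have hπ : IsOpenQuotientMap π := L.isOpenQuotientMap_mkQL
  have hπ_eq {x y : E} : π x = π y ↔ x - y ∈ L := Submodule.Quotient.eq L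
  have hsat : π ⁻¹' (π '' K) = K := by
    refine Set.Subset.antisymm ?_ (Set.subset_preimage_image _ _)
    rintro y ⟨x, hx, hxy⟩
    simpa using h.span_recessionCone_le hΛ hne (hπ_eq.mp hxy.symm) x hx
  have hmax : IsMaximalFree (Λ.map (π.toLinearMap.restrictScalars ℤ) : Set (E ⧸ L)) (π '' K) :=
    h.image hπ hsat
  have hspan : Submodule.span ℝ
      (Λ.map (π.toLinearMap.restrictScalars ℤ) : Set (E ⧸ L)) = ⊤ := by
    have := Submodule.map_span π.toLinearMap (Λ : Set E)
    rwa [hΛ, Submodule.map_top, LinearMap.range_eq_top.mpr hπ.surjective, eq_comm] at this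
  have hbot : recessionCone (π '' K) = ⊥ := by
    refine (AddSubmonoid.eq_bot_iff_forall _).mpr fun u hu => ?_
    obtain ⟨v, rfl⟩ := hπ.surjective u
    exact (Submodule.Quotient.mk_eq_zero L).mpr
      (Submodule.subset_span (mem_recessionCone_of_map_mem_image (π := π.toLinearMap) hsat hu))
  obtain ⟨P, hP, hP₀, hPK, hcard⟩ := hmax.exists_halfspaceInter_ncard_le_of_isBounded hspan
    ((hne.image π).mono (hπ.isOpenMap.image_interior_subset K))
    (isBounded_of_recessionCone_eq_bot hmax.convex hmax.isClosed hbot)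
  rw [Submodule.finrank_quotient] at hcard
  refine ⟨(fun p => (p.1.comp π, p.2)) '' P, hP.image _, ?_, ?_,
    (Set.ncard_image_le hP).trans hcard⟩
  · rintro _ ⟨p, hp, rfl⟩ hzero
    exact hP₀ p hp
      (ContinuousLinearMap.ext (hπ.surjective.forall.mpr (DFunLike.congr_fun hzero)))
  · rw [halfspaceInter_image_comp, ← hPK, hsat]

end IsMaximalFree

theorem stmt_0_general (hΛ : Submodule.span ℝ (Λ : Set E) = ⊤)
    (hK : IsMaximalFree (Λ : Set E) K) (hdim : affineSpan ℝ K = ⊤) :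
    (∃ P : Set (StrongDual ℝ E × ℝ), P.Finite ∧ K = halfspaceInter P) ∧ (facets K).Finite ∧
      (facets K).ncard ≤
        2 ^ (finrank ℝ E - finrank ℝ (Submodule.span ℝ (recessionCone K : Set E))) := by
  have hne : (interior K).Nonempty := hK.convex.interior_nonempty_iff_affineSpan_eq_top.mpr hdim
  obtain ⟨P, hP, hP₀, hPK, hcard⟩ := hK.exists_halfspaceInter_ncard_le hΛ hne
  have hfacets : facets K ⊆ (fun p => halfspaceInter P ∩ {x | p.1 x = p.2}) '' P :=
    hPK ▸ facets_halfspaceInter_subset hP hP₀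
  exact ⟨⟨P, hP, hPK⟩, (hP.image _).subset hfacets,
    (Set.ncard_le_ncard hfacets (hP.image _)).trans ((Set.ncard_image_le hP).trans hcard)⟩

end FacetBound

section IntegerLattice

variable {d : ℕ}

theorem coe_span_range_basisFun :
    (Submodule.span ℤ (Set.range (Pi.basisFun ℝ (Fin d))) : Set (Fin d → ℝ)) = intLattice d := by
  ext x
  rw [SetLike.mem_coe, Basis.mem_span_iff_repr_mem]
  simp [intLattice, funext_iff, Classical.skolem]

theorem IsMaxLatticeFree.isMaximalFree {K : Set (Fin d → ℝ)} (hK : IsMaxLatticeFree d K) :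
    IsMaximalFree (intLattice d) K where
  isClosed := hK.1.1
  convex := hK.1.2.1
  disjoint := Set.disjoint_iff_inter_eq_empty.mpr hK.1.2.2
  eq_of_subset K' hK' hsub :=
    hK.2 K' ⟨hK'.isClosed, hK'.convex, Set.disjoint_iff_inter_eq_empty.mp hK'.disjoint⟩ hsub

theorem isPolyhedron_halfspaceInter {P : Set (StrongDual ℝ (Fin d → ℝ) × ℝ)} (hP : P.Finite) :
    IsPolyhedron d (halfspaceInter P) := by
  obtain ⟨n, p, -, rfl⟩ := hP.fin_param
  have happly (f : StrongDual ℝ (Fin d → ℝ)) (x : Fin d → ℝ) :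
      ∑ j, f (Pi.single j 1) * x j = f x := by
    conv_rhs => rw [pi_eq_sum_univ' x, map_sum]
    simp [mul_comm]
  refine ⟨n, fun i j => (p i).1 (Pi.single j 1), fun i => (p i).2, ?_⟩
  simp only [happly, halfspaceInter, Set.forall_mem_range]

theorem facets_eq_setOf_isFacet (K : Set (Fin d → ℝ)) : facets K = {F | IsFacet d K F} := by
  simp [facets, IsFacet]

end IntegerLattice

/-- A `d`-dimensional maximal lattice-free set in `ℝ^d` whose
recession cone has dimension `r` is a polyhedron with at most `2^(d-r)` facets. -/
theorem stmt_0 (d r : ℕ) (K : Set (Fin d → ℝ))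
    (hK : IsMaxLatticeFree d K) (hdim : affineSpan ℝ K = ⊤)
    (hr : Module.finrank ℝ (Submodule.span ℝ (recCone d K)) = r) :
    IsPolyhedron d K ∧ {F : Set (Fin d → ℝ) | IsFacet d K F}.Finite ∧
      {F : Set (Fin d → ℝ) | IsFacet d K F}.ncard ≤ 2 ^ (d - r) := by
  subst hr
  obtain ⟨⟨P, hP, hPK⟩, hfin, hcard⟩ := stmt_0_general (ZSpan.span_top (Pi.basisFun ℝ (Fin d)))
    (coe_span_range_basisFun ▸ hK.isMaximalFree) hdim
  rw [facets_eq_setOf_isFacet] at hfin hcard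
  rw [finrank_fin_fun] at hcard
  exact ⟨hPK ▸ isPolyhedron_halfspaceInter hP, hfin, hcard⟩
end

section
/- Let K be a d-dimensional lattice-free polyhedron in ℝ^d such that the relative interior of every facet of K contains at least one point of ℤ^d. Then K is a maximal lattice-free set. -/
open Pointwise

/-! Suppose a convex set `K'` contains `K` and a point `x ∉ K`. A segment from an interior point of
`K` to `x` crosses the hyperplane of some facet `F` of `K`, at a point `q` interior to `K'`. Any
point `z` of the relative interior of `F` lies strictly between `q` and another point of `F`, so `z`
is interior to `K'`. Hence `K'` is not lattice-free as soon as some such `z` is a lattice point. -/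

open Set Filter Topology AffineMap

/-- The polyhedron of solutions of the system of linear inequalities `l i x ≤ b i`. -/
def polyhedron {ι E : Type*} [AddCommGroup E] [Module ℝ E] [TopologicalSpace E]
    (l : ι → StrongDual ℝ E) (b : ι → ℝ) : Set E :=
  {x | ∀ i, l i x ≤ b i}

/-- The face of `polyhedron l b` on which the `i`-th inequality is tight. -/
def face {ι E : Type*} [AddCommGroup E] [Module ℝ E] [TopologicalSpace E]
    (l : ι → StrongDual ℝ E) (b : ι → ℝ) (i : ι) : Set E :=
  {x ∈ polyhedron l b | l i x = b i}

/-- A system of linear inequalities is irredundant if dropping any one of them enlarges the set of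
solutions. -/
def IsIrredundant {ι E : Type*} [AddCommGroup E] [Module ℝ E] [TopologicalSpace E]
    (l : ι → StrongDual ℝ E) (b : ι → ℝ) : Prop :=
  ∀ i, ∃ y, b i < l i y ∧ ∀ j ≠ i, l j y ≤ b j

/-- Facets of a full-dimensional convex set in a real vector space of any dimension: `IsFacet` with
the dimension count replaced by codimension one. -/
structure IsCodimOneFace {E : Type*} [AddCommGroup E] [Module ℝ E] (K F : Set E) : Prop where
  nonempty : F.Nonempty
  isExtreme : IsExtreme ℝ K F
  convex : Convex ℝ F
  finrank_quotient : Module.finrank ℝ (E ⧸ (affineSpan ℝ F).direction) = 1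

theorem exists_irredundant_subfamily {ι α : Type*} [Finite ι] (s : ι → Set α) :
    ∃ S : Set ι, ⋂ i ∈ S, s i = ⋂ i, s i ∧ ∀ i ∈ S, ∃ y ∉ s i, ∀ j ∈ S, j ≠ i → y ∈ s j := by
  obtain ⟨S, hS⟩ := (toFinite {S : Set ι | ⋂ i ∈ S, s i = ⋂ i, s i}).exists_minimal
    ⟨univ, by simp⟩
  refine ⟨S, hS.prop, fun i hi => ?_⟩
  by_contra! h
  have hdrop : ⋂ j ∈ S \ {i}, s j = ⋂ j, s j := by
    refine Subset.antisymm (fun x hx => ?_) fun x hx => mem_iInter₂.2 fun j _ => mem_iInter.1 hx j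
    have hx' : ∀ j ∈ S, j ≠ i → x ∈ s j := fun j hj hji => mem_iInter₂.1 hx j ⟨hj, hji⟩
    have hxi : x ∈ s i := by
      by_contra hxi
      obtain ⟨j, hj, hji, hxj⟩ := h x hxi
      exact hxj (hx' j hj hji)
    rw [← hS.prop]
    refine mem_iInter₂.2 fun j hj => ?_
    obtain rfl | hji := eq_or_ne j i
    exacts [hxi, hx' j hj hji]
  exact hS.not_prop_of_lt (sdiff_singleton_ssubset.mpr hi) hdrop

section AffineSpan

variable {E : Type*} [AddCommGroup E] [Module ℝ E] [TopologicalSpace E]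

theorem mem_nhdsWithin_affineSpan_of_mem_intrinsicInterior {F : Set E} {z : E}
    (hz : z ∈ intrinsicInterior ℝ F) : F ∈ 𝓝[affineSpan ℝ F] z := by
  obtain ⟨z, hzF, rfl⟩ := mem_intrinsicInterior.mp hz
  exact preimage_coe_mem_nhds_subtype.mp (mem_interior_iff_mem_nhds.mp hzF)

variable [IsTopologicalAddGroup E] [ContinuousSMul ℝ E]

theorem eventually_lineMap_mem {A : AffineSubspace ℝ E} {s : Set E} {z q : E} (hz : z ∈ A)
    (hq : q ∈ A) (hs : s ∈ 𝓝[A] z) : ∀ᶠ t in 𝓝 (0 : ℝ), lineMap z q t ∈ s := by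
  have hline : Tendsto (lineMap z q : ℝ → E) (𝓝 0) (𝓝[A] z) :=
    tendsto_nhdsWithin_iff.2 ⟨lineMap_continuous.tendsto' 0 z (lineMap_apply_zero z q),
      Eventually.of_forall fun t => lineMap_mem t hz hq⟩
  exact hline hs

theorem le_affineSpan_of_mem_nhdsWithin {A : AffineSubspace ℝ E} {s : Set E} {w : E} (hw : w ∈ A)
    (hs : s ∈ 𝓝[A] w) : A ≤ affineSpan ℝ s := by
  intro v hv
  obtain ⟨t, hts, ht0⟩ := (((eventually_lineMap_mem hw hv hs).filter_mono
    nhdsWithin_le_nhds).and (self_mem_nhdsWithin (s := {0}ᶜ))).exists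
  have hws : w ∈ affineSpan ℝ s := subset_affineSpan ℝ s (mem_of_mem_nhdsWithin hw hs)
  simpa [lineMap_apply, smul_smul, inv_mul_cancel₀ ht0] using
    lineMap_mem t⁻¹ hws (subset_affineSpan ℝ s hts)

theorem intrinsicInterior_subset_interior {K F : Set E} (hK : Convex ℝ K) (hFK : F ⊆ K)
    (h : (interior K ∩ affineSpan ℝ F).Nonempty) : intrinsicInterior ℝ F ⊆ interior K := by
  intro z hz
  obtain ⟨q, hqK, hqF⟩ := h
  have hzF : z ∈ affineSpan ℝ F := subset_affineSpan ℝ F (intrinsicInterior_subset hz)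
  obtain ⟨t, htF, ht0⟩ := (((eventually_lineMap_mem hzF hqF
    (mem_nhdsWithin_affineSpan_of_mem_intrinsicInterior hz)).filter_mono nhdsWithin_le_nhds).and
    (self_mem_nhdsWithin (s := Iio 0))).exists
  have h0 : (0 : ℝ) ∈ openSegment ℝ 1 t := by
    rw [openSegment_symm, openSegment_eq_Ioo (ht0.trans one_pos)]
    exact ⟨ht0, one_pos⟩
  have hzseg : z ∈ openSegment ℝ q (lineMap z q t) := by
    have h := mem_image_of_mem (lineMap z q : ℝ →ᵃ[ℝ] E) h0
    rwa [image_openSegment, lineMap_apply_zero, lineMap_apply_one] at h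
  exact hK.openSegment_interior_self_subset_interior hqK (hFK htF) hzseg

end AffineSpan

theorem exists_mem_openSegment_eq {E : Type*} [AddCommGroup E] [Module ℝ E] (f : E →ₗ[ℝ] ℝ)
    {c : ℝ} {x y : E} (hx : f x < c) (hy : c < f y) : ∃ q ∈ openSegment ℝ x y, f q = c := by
  have hc : c ∈ openSegment ℝ (f x) (f y) := by
    rw [openSegment_eq_Ioo (hx.trans hy)]
    exact ⟨hx, hy⟩
  rwa [← f.coe_toAffineMap, ← image_openSegment] at hc

section Polyhedron

variable {ι E : Type*} [AddCommGroup E] [Module ℝ E] [TopologicalSpace E]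
  {l : ι → StrongDual ℝ E} {b : ι → ℝ}

theorem convex_polyhedron : Convex ℝ (polyhedron l b) := by
  simp only [polyhedron, ofPred_forall]
  exact convex_iInter fun i => convex_halfSpace_le (l i).isLinear (b i)

theorem exists_irredundant_subsystem [Finite ι] (l : ι → StrongDual ℝ E) (b : ι → ℝ) :
    ∃ S : Set ι, polyhedron (fun i : S => l i) (fun i : S => b i) = polyhedron l b ∧
      IsIrredundant (fun i : S => l i) (fun i : S => b i) := by
  obtain ⟨S, hS, hirr⟩ := exists_irredundant_subfamily fun i => {x | l i x ≤ b i}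
  refine ⟨S, ?_, fun ⟨i, hi⟩ => ?_⟩
  · simpa [polyhedron, ofPred_forall] using hS
  · obtain ⟨y, hyi, hy⟩ := hirr i hi
    exact ⟨y, not_le.mp hyi, fun ⟨j, hj⟩ hji => hy j hj (by simpa using hji)⟩

theorem isExposed_face {i : ι} : IsExposed ℝ (polyhedron l b) (face l b i) := by
  rintro ⟨w, hwK, hw⟩
  refine ⟨l i, Subset.antisymm (fun x hx => ⟨hx.1, fun y hy => (hy i).trans_eq hx.2.symm⟩)
    fun x hx => ⟨hx.1, (hx.1 i).antisymm ?_⟩⟩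
  exact hw.symm.trans_le (hx.2 w hwK)

theorem exists_mem_polyhedron_lt (hdim : affineSpan ℝ (polyhedron l b) = ⊤) {i : ι} {y : E}
    (hy : l i y ≠ b i) : ∃ x ∈ polyhedron l b, l i x < b i := by
  by_contra! h
  have hle : affineSpan ℝ (polyhedron l b) ≤
      (affineSpan ℝ {b i}).comap (l i : E →ₗ[ℝ] ℝ).toAffineMap :=
    affineSpan_le.2 fun x hx => by simpa using (hx i).antisymm (h x hx)
  have hyK : y ∈ affineSpan ℝ (polyhedron l b) := hdim ▸ AffineSubspace.mem_top ℝ E y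
  exact hy (by simpa using hle hyK)

theorem exists_forall_lt_of_affineSpan_eq_top [Finite ι]
    (hdim : affineSpan ℝ (polyhedron l b) = ⊤) (hl : ∀ i, ∃ y, l i y ≠ b i) :
    ∃ p, ∀ i, l i p < b i := by
  suffices h : ∃ p ∈ polyhedron l b, ∀ i ∈ univ, l i p < b i by simpa using h.imp fun p hp => hp.2
  induction (univ : Set ι), toFinite (univ : Set ι) using Set.Finite.induction_on with
  | empty =>
    have hne : (polyhedron l b).Nonempty := (affineSpan_nonempty ℝ).1 ⟨0, by simp [hdim]⟩
    exact hne.imp fun p hp => ⟨hp, by simp⟩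
  | @insert i s _ _ ih =>
    obtain ⟨p, hp, hps⟩ := ih
    obtain ⟨y, hy⟩ := hl i
    obtain ⟨x, hx, hxi⟩ := exists_mem_polyhedron_lt hdim hy
    refine ⟨(1 / 2 : ℝ) • p + (1 / 2 : ℝ) • x,
      convex_polyhedron hp hx (by norm_num) (by norm_num) (by norm_num), fun j hj => ?_⟩
    simp only [map_add, map_smul, smul_eq_mul]
    obtain rfl | hjs := hj
    · linarith [hp j]
    · linarith [hps j hjs, hx j]

theorem mem_interior_polyhedron [Finite ι] {p : E} (hp : ∀ i, l i p < b i) :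
    p ∈ interior (polyhedron l b) := by
  simp only [polyhedron, ofPred_forall, interior_iInter_of_finite, mem_iInter]
  exact fun i => interior_maximal (fun x hx => le_of_lt hx)
    (isOpen_lt (l i).continuous continuous_const) (hp i)

theorem IsIrredundant.exists_eq_and_forall_lt (hirr : IsIrredundant l b) {p : E}
    (hp : ∀ i, l i p < b i) (i : ι) : ∃ w, l i w = b i ∧ ∀ j ≠ i, l j w < b j := by
  obtain ⟨y, hyi, hy⟩ := hirr i
  obtain ⟨w, hw, hwi⟩ := exists_mem_openSegment_eq (l i : E →ₗ[ℝ] ℝ) (hp i) hyi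
  refine ⟨w, hwi, fun j hji => ?_⟩
  obtain ⟨s, t, hs, ht, hst, rfl⟩ := hw
  calc l j (s • p + t • y) = s * l j p + t * l j y := by simp
    _ < s * b j + t * b j :=
      add_lt_add_of_lt_of_le (mul_lt_mul_of_pos_left (hp j) hs)
        (mul_le_mul_of_nonneg_left (hy j hji) ht.le)
    _ = b j := by rw [← add_mul, hst, one_mul]

variable [IsTopologicalAddGroup E] [ContinuousSMul ℝ E]

theorem affineSpan_face [Finite ι] {i : ι} {w : E} (hwi : l i w = b i)
    (hw : ∀ j ≠ i, l j w < b j) :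
    affineSpan ℝ (face l b i) = AffineSubspace.mk' w (l i : E →ₗ[ℝ] ℝ).ker := by
  have mem_hyperplane (x : E) : x ∈ AffineSubspace.mk' w (l i : E →ₗ[ℝ] ℝ).ker ↔ l i x = b i := by
    simp [AffineSubspace.mem_mk', sub_eq_zero, hwi]
  refine le_antisymm (affineSpan_le.2 fun x hx => (mem_hyperplane x).2 hx.2)
    (le_affineSpan_of_mem_nhdsWithin (AffineSubspace.self_mem_mk' w _) ?_)
  have hslack : ∀ᶠ x in 𝓝 w, ∀ j, j ≠ i → l j x < b j := eventually_all.2 fun j =>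
    eventually_imp_distrib_left.2 fun hji =>
      (l j).continuous.continuousAt.eventually_lt continuousAt_const (hw j hji)
  filter_upwards [hslack.filter_mono nhdsWithin_le_nhds, self_mem_nhdsWithin] with x hx hxi
  replace hxi : l i x = b i := (mem_hyperplane x).1 hxi
  refine ⟨fun j => ?_, hxi⟩
  obtain rfl | hji := eq_or_ne j i
  exacts [hxi.le, (hx j hji).le]

theorem isCodimOneFace_face [Finite ι] {i : ι} {w : E} (hli : l i ≠ 0) (hwi : l i w = b i)
    (hw : ∀ j ≠ i, l j w < b j) : IsCodimOneFace (polyhedron l b) (face l b i) where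
  nonempty := by
    have h : (affineSpan ℝ (face l b i) : Set E).Nonempty :=
      ⟨w, affineSpan_face hwi hw ▸ AffineSubspace.self_mem_mk' w _⟩
    exact (affineSpan_nonempty ℝ).1 h
  isExtreme := isExposed_face.isExtreme
  convex := isExposed_face.convex convex_polyhedron
  finrank_quotient := by
    have hsurj : Function.Surjective (l i : E →ₗ[ℝ] ℝ) :=
      LinearMap.surjective fun h => hli (ContinuousLinearMap.coe_injective h)
    rw [affineSpan_face hwi hw, AffineSubspace.direction_mk',
      (LinearMap.quotKerEquivOfSurjective _ hsurj).finrank_eq, Module.finrank_self]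

theorem IsIrredundant.exists_codimOneFace_crossing [Finite ι] (hirr : IsIrredundant l b)
    (hdim : affineSpan ℝ (polyhedron l b) = ⊤) {x : E} (hx : x ∉ polyhedron l b) :
    ∃ F, IsCodimOneFace (polyhedron l b) F ∧
      ∃ p ∈ interior (polyhedron l b), (openSegment ℝ p x ∩ affineSpan ℝ F).Nonempty := by
  obtain ⟨p, hp⟩ := exists_forall_lt_of_affineSpan_eq_top hdim
    fun i => (hirr i).imp fun _ hy => hy.1.ne'
  obtain ⟨i, hxi⟩ : ∃ i, b i < l i x := by simpa [polyhedron] using hx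
  obtain ⟨w, hwi, hw⟩ := hirr.exists_eq_and_forall_lt hp i
  obtain ⟨q, hqseg, hqi⟩ := exists_mem_openSegment_eq (l i : E →ₗ[ℝ] ℝ) (hp i) hxi
  have hli : l i ≠ 0 := fun h => ((hp i).trans hxi).ne (by simp [h])
  refine ⟨face l b i, isCodimOneFace_face hli hwi hw, p, mem_interior_polyhedron hp, q, hqseg, ?_⟩
  simpa [affineSpan_face hwi hw, AffineSubspace.mem_mk', sub_eq_zero, hwi] using hqi

theorem exists_codimOneFace_crossing [Finite ι] (hdim : affineSpan ℝ (polyhedron l b) = ⊤) {x : E}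
    (hx : x ∉ polyhedron l b) :
    ∃ F, IsCodimOneFace (polyhedron l b) F ∧
      ∃ p ∈ interior (polyhedron l b), (openSegment ℝ p x ∩ affineSpan ℝ F).Nonempty := by
  obtain ⟨S, hS, hirr⟩ := exists_irredundant_subsystem l b
  rw [← hS] at hdim hx ⊢
  exact hirr.exists_codimOneFace_crossing hdim hx

theorem stmt_3_general [Finite ι] {Λ K' : Set E} (hdim : affineSpan ℝ (polyhedron l b) = ⊤)
    (hfacets : ∀ F, IsCodimOneFace (polyhedron l b) F → (intrinsicInterior ℝ F ∩ Λ).Nonempty)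
    (hK' : Convex ℝ K') (hfree : interior K' ∩ Λ = ∅) (hsub : polyhedron l b ⊆ K') :
    K' = polyhedron l b := by
  refine Subset.antisymm (fun x hxK' => ?_) hsub
  by_contra hx
  obtain ⟨F, hF, p, hp, q, hqseg, hqF⟩ := exists_codimOneFace_crossing hdim hx
  have hqK' : q ∈ interior K' :=
    hK'.openSegment_interior_self_subset_interior (interior_mono hsub hp) hxK' hqseg
  obtain ⟨z, hzF, hzΛ⟩ := hfacets F hF
  have hzK' : z ∈ interior K' :=
    intrinsicInterior_subset_interior hK' (hF.isExtreme.subset.trans hsub) ⟨q, hqK', hqF⟩ hzF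
  exact hfree.subset ⟨hzK', hzΛ⟩

end Polyhedron

theorem IsPolyhedron.exists_eq_polyhedron {d : ℕ} {K : Set (Fin d → ℝ)} (hK : IsPolyhedron d K) :
    ∃ (n : ℕ) (l : Fin n → StrongDual ℝ (Fin d → ℝ)) (b : Fin n → ℝ), K = polyhedron l b := by
  obtain ⟨n, a, b, rfl⟩ := hK
  exact ⟨n, fun i => ∑ j, a i j • ContinuousLinearMap.proj j, b, by simp [polyhedron]⟩

theorem IsCodimOneFace.isFacet {d : ℕ} {K F : Set (Fin d → ℝ)} (hF : IsCodimOneFace K F) :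
    IsFacet d K F := by
  refine ⟨hF.nonempty, hF.isExtreme, hF.convex, ?_⟩
  have h := (affineSpan ℝ F).direction.finrank_quotient_add_finrank
  rwa [hF.finrank_quotient, Module.finrank_fin_fun, add_comm] at h

/-- A `d`-dimensional lattice-free polyhedron in `ℝ^d` whose every
facet has an integer point in its relative interior is a maximal lattice-free set. -/
theorem stmt_3 (d : ℕ) (K : Set (Fin d → ℝ))
    (hK : IsLatticeFree d K) (hpoly : IsPolyhedron d K) (hdim : affineSpan ℝ K = ⊤)
    (hfacets : ∀ F : Set (Fin d → ℝ), IsFacet d K F →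
      (intrinsicInterior ℝ F ∩ intLattice d).Nonempty) :
    IsMaxLatticeFree d K := by
  obtain ⟨n, l, b, rfl⟩ := hpoly.exists_eq_polyhedron
  exact ⟨hK, fun K' hK' hsub =>
    stmt_3_general hdim (fun F hF => hfacets F hF.isFacet) hK'.2.1 hK'.2.2 hsub⟩
end

section
/- Let K ⊆ ℝ^d be a maximal lattice-free set of dimension less than d. Then K = a + L is a translate of a (d−1)-dimensional linear subspace L of ℝ^d satisfying L ≠ span(L ∩ ℤ^d). -/
open Pointwise

/-!
A set of deficient dimension lies in a hyperplane, which is itself lattice-free, so by maximality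
`K` is that hyperplane `f ⁻¹' {f a}`. If `ker f` were spanned by its lattice points, there would be
a nonzero functional `g` vanishing on `ker f` and integral on `ℤ^d`. Then `g` is constant on `K`,
and the lattice-free slab `⌊g a⌋ ≤ g ≤ ⌊g a⌋ + 1` would properly contain `K`.
-/

open Module

theorem exists_dual_ne_zero_subset_preimage_singleton {k V : Type*} [DivisionRing k]
    [AddCommGroup V] [Module k V] {s : Set V} (hs : (affineSpan k s).direction ≠ ⊤) :
    ∃ f : Dual k V, f ≠ 0 ∧ ∃ a, s ⊆ f ⁻¹' {f a} := by
  obtain ⟨f, hf, hsf⟩ := Submodule.exists_le_ker_of_lt_top _ hs.lt_top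
  refine ⟨f, hf, ?_⟩
  rcases s.eq_empty_or_nonempty with rfl | ⟨a, ha⟩
  · exact ⟨0, Set.empty_subset _⟩
  · refine ⟨a, fun x hx => sub_eq_zero.1 ?_⟩
    rw [← map_sub]
    exact hsf (AffineSubspace.vsub_mem_direction (mem_affineSpan k hx) (mem_affineSpan k ha))

theorem preimage_singleton_apply_eq_image_add_ker {R M N : Type*} [Semiring R] [AddCommGroup M]
    [AddCommGroup N] [Module R M] [Module R N] (f : M →ₗ[R] N) (a : M) :
    f ⁻¹' {f a} = (fun x => a + x) '' (LinearMap.ker f : Set M) := by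
  ext x
  simp [Set.image_add_left, neg_add_eq_sub, sub_eq_zero]

section IntegralFunctionals

variable {R K E : Type*} [CommRing R] [IsDomain R] [Field K] [Algebra R K] [FaithfulSMul R K]
  [AddCommGroup E] [Module K E] [Module R E] [IsScalarTower R K E]

theorem exists_dual_ne_zero_of_not_le [IsPrincipalIdealRing R] {Λ : Submodule R E}
    [Module.Finite R Λ] {L : Submodule K E} (h : ¬ Λ ≤ L.restrictScalars R) :
    ∃ φ : Dual R Λ, φ ≠ 0 ∧ ∀ z : Λ, (z : E) ∈ L → φ z = 0 := by
  obtain ⟨z, hzΛ, hzL⟩ := SetLike.not_le_iff_exists.1 h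
  -- The range of `π` is finitely generated and torsion-free, hence free.
  let π : Λ →ₗ[R] E ⧸ L := L.mkQ.restrictScalars R ∘ₗ Λ.subtype
  have : IsTorsionFree R (E ⧸ L) := .trans_faithfulSMul R K (E ⧸ L)
  have hπz : π.rangeRestrict ⟨z, hzΛ⟩ ≠ 0 := fun h0 =>
    hzL ((Submodule.Quotient.mk_eq_zero L).1 (congrArg Subtype.val h0))
  obtain ⟨ψ, hψ⟩ := not_forall.1 (mt (forall_dual_apply_eq_zero_iff R _).1 hπz)
  refine ⟨ψ ∘ₗ π.rangeRestrict, fun h0 => hψ (LinearMap.congr_fun h0 _), fun w hw => ?_⟩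
  have hπw : π.rangeRestrict w = 0 := Subtype.ext ((Submodule.Quotient.mk_eq_zero L).2 hw)
  rw [LinearMap.comp_apply, hπw, map_zero]

theorem exists_dual_extending_dual_span_basis {ι : Type*} (b : Basis ι K E)
    (φ : Dual R (Submodule.span R (Set.range b))) :
    ∃ f : Dual K E, ∀ z : Submodule.span R (Set.range b), f z = algebraMap R K (φ z) := by
  let f : Dual K E := b.constr K fun i => algebraMap R K (φ (b.restrictScalars R i))
  have hf : f.restrictScalars R ∘ₗ Submodule.subtype _ = Algebra.linearMap R K ∘ₗ φ :=
    (b.restrictScalars R).ext fun i => by simp [f]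
  exact ⟨f, LinearMap.congr_fun hf⟩

theorem exists_integral_dual_ne_zero_of_ne_top [IsPrincipalIdealRing R] {ι : Type*} [Finite ι]
    (b : Basis ι K E) {L : Submodule K E} (hL : L ≠ ⊤) :
    ∃ f : Dual K E, f ≠ 0 ∧
      Submodule.span K ((L : Set E) ∩ Submodule.span R (Set.range b)) ≤ LinearMap.ker f ∧
      Set.MapsTo f (Submodule.span R (Set.range b)) (Set.range (algebraMap R K)) := by
  have hΛL : ¬ Submodule.span R (Set.range b) ≤ L.restrictScalars R := fun h =>
    hL (top_le_iff.1 (b.span_eq.ge.trans (Submodule.span_le.2 (Submodule.subset_span.trans h))))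
  have : Module.Finite R (Submodule.span R (Set.range b)) := .span_of_finite R (Set.finite_range b)
  obtain ⟨φ, hφ, hφL⟩ := exists_dual_ne_zero_of_not_le hΛL
  obtain ⟨f, hf⟩ := exists_dual_extending_dual_span_basis b φ
  refine ⟨f, ?_, Submodule.span_le.2 ?_, fun z hz => ⟨φ ⟨z, hz⟩, (hf ⟨z, hz⟩).symm⟩⟩
  · rintro rfl
    refine hφ (LinearMap.ext fun z => FaithfulSMul.algebraMap_injective R K ?_)
    simpa using (hf z).symm
  · rintro z ⟨hzL, hzΛ⟩
    simpa [hφL ⟨z, hzΛ⟩ hzL] using hf ⟨z, hzΛ⟩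

end IntegralFunctionals

theorem intLattice_eq_span_basisFun (d : ℕ) :
    intLattice d = Submodule.span ℤ (Set.range (Pi.basisFun ℝ (Fin d))) := by
  ext x
  simp [intLattice, Basis.mem_span_iff_repr_mem, funext_iff, Classical.skolem]

section LatticeFree

variable {d : ℕ} {f : Dual ℝ (Fin d → ℝ)}

theorem isLatticeFree_preimage_dual (hf : f ≠ 0) {s : Set ℝ} (hs : IsClosed s) (hc : Convex ℝ s)
    (h : ∀ z ∈ intLattice d, f z ∉ interior s) : IsLatticeFree d (f ⁻¹' s) := by
  refine ⟨hs.preimage f.continuous_of_finiteDimensional, hc.linear_preimage f, ?_⟩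
  have hinterior : interior (f ⁻¹' s) = f ⁻¹' interior s :=
    f.toContinuousLinearMap.interior_preimage (LinearMap.surjective_of_ne_zero hf) s
  rw [hinterior, ← Set.disjoint_iff_inter_eq_empty, Set.disjoint_right]
  exact h

theorem isLatticeFree_preimage_singleton (hf : f ≠ 0) (c : ℝ) : IsLatticeFree d (f ⁻¹' {c}) :=
  isLatticeFree_preimage_dual hf isClosed_singleton (convex_singleton c) (by simp)

theorem isLatticeFree_preimage_Icc (hf : f ≠ 0)
    (h_int : Set.MapsTo f (intLattice d) (Set.range (Int.cast : ℤ → ℝ))) (n : ℤ) :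
    IsLatticeFree d (f ⁻¹' Set.Icc (n : ℝ) (n + 1)) := by
  refine isLatticeFree_preimage_dual hf isClosed_Icc (convex_Icc _ _) fun z hz hmem => ?_
  obtain ⟨m, hm⟩ := h_int hz
  rw [interior_Icc, ← hm] at hmem
  have hlt : n < m := by exact_mod_cast hmem.1
  have hgt : m < n + 1 := by exact_mod_cast hmem.2
  lia

namespace IsMaxLatticeFree

variable {K : Set (Fin d → ℝ)}

theorem eq_preimage_singleton (hK : IsMaxLatticeFree d K) (hf : f ≠ 0) {c : ℝ}
    (h : K ⊆ f ⁻¹' {c}) : K = f ⁻¹' {c} :=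
  (hK.2 _ (isLatticeFree_preimage_singleton hf c) h).symm

theorem not_subset_preimage_singleton (hK : IsMaxLatticeFree d K) (hf : f ≠ 0)
    (h_int : Set.MapsTo f (intLattice d) (Set.range (Int.cast : ℤ → ℝ))) (c : ℝ) :
    ¬ K ⊆ f ⁻¹' {c} := by
  intro h
  have hc : c ∈ Set.Icc (⌊c⌋ : ℝ) (⌊c⌋ + 1) := ⟨Int.floor_le c, (Int.lt_floor_add_one c).le⟩
  have hslab : f ⁻¹' Set.Icc (⌊c⌋ : ℝ) (⌊c⌋ + 1) = K :=
    hK.2 _ (isLatticeFree_preimage_Icc hf h_int ⌊c⌋)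
      (h.trans (Set.preimage_mono (Set.singleton_subset_iff.2 hc)))
  have hIcc : Set.Icc (⌊c⌋ : ℝ) (⌊c⌋ + 1) ⊆ {c} :=
    (LinearMap.surjective_of_ne_zero hf).preimage_subset_preimage_iff.1 (hslab.trans_subset h)
  exact (Int.lt_floor_add_one c).ne' (hIcc (Set.right_mem_Icc.2 (lt_add_one (⌊c⌋ : ℝ)).le))

theorem span_ker_inter_intLattice_ne (hK : IsMaxLatticeFree d K) (hf : f ≠ 0) {a : Fin d → ℝ}
    (h : K ⊆ f ⁻¹' {f a}) :
    Submodule.span ℝ ((LinearMap.ker f : Set (Fin d → ℝ)) ∩ intLattice d) ≠ LinearMap.ker f := by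
  intro hspan
  obtain ⟨g, hg, hfg, h_int⟩ := exists_integral_dual_ne_zero_of_ne_top (R := ℤ)
    (Pi.basisFun ℝ (Fin d)) (mt LinearMap.ker_eq_top.1 hf)
  rw [← intLattice_eq_span_basisFun] at hfg h_int
  rw [hspan] at hfg
  refine hK.not_subset_preimage_singleton hg h_int (g a) fun x hx => ?_
  have hxa : x - a ∈ LinearMap.ker f := LinearMap.sub_mem_ker_iff.2 (h hx)
  exact LinearMap.sub_mem_ker_iff.1 (hfg hxa)

end IsMaxLatticeFree

end LatticeFree

/-- A maximal lattice-free set of dimension less than `d` is a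
translate `a + L` of a `(d-1)`-dimensional linear subspace `L` with
`L ≠ span(L ∩ ℤ^d)`. -/
theorem stmt_4 (d : ℕ) (K : Set (Fin d → ℝ))
    (hK : IsMaxLatticeFree d K)
    (hdim : Module.finrank ℝ (affineSpan ℝ K).direction < d) :
    ∃ (a : Fin d → ℝ) (L : Submodule ℝ (Fin d → ℝ)),
      Module.finrank ℝ L = d - 1 ∧
      K = (fun x => a + x) '' (L : Set (Fin d → ℝ)) ∧
      (L : Set (Fin d → ℝ)) ≠
        (Submodule.span ℝ ((L : Set (Fin d → ℝ)) ∩ intLattice d) :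
          Set (Fin d → ℝ)) := by
  have hdir : (affineSpan ℝ K).direction ≠ ⊤ := fun h =>
    hdim.ne (by rw [h, finrank_top, finrank_fin_fun])
  obtain ⟨f, hf, a, hKf⟩ := exists_dual_ne_zero_subset_preimage_singleton hdir
  refine ⟨a, LinearMap.ker f, ?_, ?_, fun hspan => ?_⟩
  · have hrank := Dual.finrank_ker_add_one_of_ne_zero hf
    rw [finrank_fin_fun] at hrank
    lia
  · rw [hK.eq_preimage_singleton hf hKf, preimage_singleton_apply_eq_image_add_ker]
  · exact hK.span_ker_inter_intLattice_ne hf hKf (SetLike.coe_injective hspan.symm)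
end

section
/- Let L be a (d−1)-dimensional linear subspace of ℝ^d with L ≠ span(L ∩ ℤ^d), and let a ∈ ℝ^d. Then the translate K = a + L is a maximal lattice-free set in ℝ^d. -/
open Pointwise

/-!
Let `L = ker f` be the hyperplane. If `f(ℤ^d)` were cyclic, generated by `g`, then for integer
vectors `x`, `v` with `f x = n g`, `f v = m g` the vector `m x - n v` would be an integer point of
`L`, and for a fixed `v ∉ L` these vectors span `L`. Hence `f(ℤ^d)` is dense in `ℝ`. A convex set
that contains `a + L` and a further point `x` contains the whole open slab between the levels `f a`
and `f x`, and by density this slab contains an integer point.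
-/

variable {E : Type*} [AddCommGroup E]

theorem vadd_ker_eq_preimage_singleton {R F : Type*} [Ring R] [AddCommGroup F] [Module R E]
    [Module R F] (f : E →ₗ[R] F) (a : E) :
    a +ᵥ (LinearMap.ker f : Set E) = f ⁻¹' {f a} := by
  ext x
  simp [Set.mem_vadd_set_iff_neg_vadd_mem, neg_add_eq_zero, eq_comm (a := f x)]

section DivisionRing

variable {K : Type*} [DivisionRing K] [Module K E]

theorem isCoatom_of_finrank_le [FiniteDimensional K E] {L : Submodule K E} (hL : L ≠ ⊤)
    (hfinrank : Module.finrank K E ≤ Module.finrank K L + 1) : IsCoatom L := by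
  refine ⟨hL, fun M hLM => Submodule.eq_top_of_finrank_eq ?_⟩
  have hlt := Submodule.finrank_lt_finrank_of_lt hLM
  exact (Submodule.finrank_le M).antisymm (by omega)

theorem exists_ne_zero_ker_eq_of_isCoatom {L : Submodule K E} (hL : IsCoatom L) :
    ∃ f : E →ₗ[K] K, f ≠ 0 ∧ LinearMap.ker f = L := by
  obtain ⟨f, hf, hle⟩ := L.exists_le_ker_of_lt_top hL.lt_top
  exact ⟨f, hf, (hL.le_iff.mp hle).resolve_left (mt LinearMap.ker_eq_top.mp hf)⟩

end DivisionRing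

section Field

variable {K : Type*} [Field K] [Module K E]

theorem ker_le_span_image_smul_sub_smul {s : Set E} (hs : Submodule.span K s = ⊤)
    {f : E →ₗ[K] K} {v : E} (hv : f v ≠ 0) :
    LinearMap.ker f ≤ Submodule.span K ((fun x => f v • x - f x • v) '' s) := by
  -- `P` is `f v` times the projection onto `ker f` along `v`.
  let P : E →ₗ[K] E := f v • LinearMap.id - f.smulRight v
  have hP (x : E) : P x ∈ Submodule.span K (P '' s) := by
    rw [Submodule.span_image, hs]
    exact Submodule.mem_map_of_mem Submodule.mem_top
  intro x hx
  have hPx : P x = f v • x := by simp [P, LinearMap.mem_ker.mp hx]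
  exact (Submodule.smul_mem_iff _ hv).mp (hPx ▸ hP x)

theorem ker_eq_span_of_map_le_zmultiples {Λ : AddSubgroup E}
    (hΛ : Submodule.span K (Λ : Set E) = ⊤) {f : E →ₗ[K] K} {g : K}
    (hg : Λ.map f.toAddMonoidHom ≤ AddSubgroup.zmultiples g) :
    LinearMap.ker f = Submodule.span K ((LinearMap.ker f : Set E) ∩ Λ) := by
  refine le_antisymm ?_ (Submodule.span_le.mpr Set.inter_subset_left)
  by_cases hΛf : (Λ : Set E) ⊆ LinearMap.ker f
  · rw [Set.inter_eq_self_of_subset_right hΛf, hΛ]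
    exact le_top
  obtain ⟨v, hv, hfv⟩ := Set.not_subset.mp hΛf
  refine (ker_le_span_image_smul_sub_smul hΛ hfv).trans (Submodule.span_le.mpr ?_)
  rintro _ ⟨x, hx, rfl⟩
  obtain ⟨m, hm : m • g = f v⟩ := hg ⟨v, hv, rfl⟩
  obtain ⟨n, hn : n • g = f x⟩ := hg ⟨x, hx, rfl⟩
  have hfactor : f v • x - f x • v = g • (m • x - n • v) := by
    rw [← hm, ← hn, smul_sub, smul_assoc, smul_assoc, smul_comm m, smul_comm n]
  have hker : f (m • x - n • v) = 0 := by
    rw [map_sub, map_zsmul, map_zsmul, ← hm, ← hn, smul_comm, sub_self]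
  simp only [hfactor]
  exact Submodule.smul_mem _ g
    (Submodule.subset_span ⟨hker, Λ.sub_mem (Λ.zsmul_mem hx m) (Λ.zsmul_mem hv n)⟩)

end Field

theorem preimage_openSegment_subset_of_convex {𝕜 : Type*} [Field 𝕜] [LinearOrder 𝕜]
    [IsStrictOrderedRing 𝕜] [Module 𝕜 E] {f : E →ₗ[𝕜] 𝕜} {C : Set E} (hC : Convex 𝕜 C) {c : 𝕜}
    (hc : f ⁻¹' {c} ⊆ C) {x : E} (hx : x ∈ C) : f ⁻¹' openSegment 𝕜 c (f x) ⊆ C := by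
  rintro y ⟨s, t, hs, ht, hst, hy⟩
  have hp : s⁻¹ • (y - t • x) ∈ C := by
    apply hc
    rw [Set.mem_preimage, map_smul, map_sub, map_smul, ← hy, add_sub_cancel_right,
      inv_smul_smul₀ hs.ne', Set.mem_singleton_iff]
  have hcomb : s • s⁻¹ • (y - t • x) + t • x ∈ C := hC hp hx hs.le ht.le hst
  rwa [smul_inv_smul₀ hs.ne', sub_add_cancel] at hcomb

variable [Module ℝ E]

theorem dense_image_of_ker_ne_span {Λ : AddSubgroup E}
    (hΛ : Submodule.span ℝ (Λ : Set E) = ⊤) {f : E →ₗ[ℝ] ℝ}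
    (hne : LinearMap.ker f ≠ Submodule.span ℝ ((LinearMap.ker f : Set E) ∩ Λ)) :
    Dense (f '' Λ) := by
  refine (Λ.map f.toAddMonoidHom).dense_or_cyclic.resolve_right ?_
  rintro ⟨g, hg⟩
  rw [← AddSubgroup.zmultiples_eq_closure] at hg
  exact hne (ker_eq_span_of_map_le_zmultiples hΛ hg.le)

variable [TopologicalSpace E]

/-- `S`-free convex sets: closed convex sets with no point of `S` in their interior. For
`S = intLattice d` this unfolds to `IsLatticeFree d`. -/
def IsFreeOf (S C : Set E) : Prop :=
  IsClosed C ∧ Convex ℝ C ∧ interior C ∩ S = ∅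

theorem isMaxLatticeFree_iff_maximal {d : ℕ} {C : Set (Fin d → ℝ)} :
    IsMaxLatticeFree d C ↔ Maximal (IsFreeOf (intLattice d)) C := by
  simp only [maximal_subset_iff, eq_comm (a := C)]
  rfl

section ContinuousFunctional

variable [ContinuousAdd E] [ContinuousSMul ℝ E]

theorem isFreeOf_preimage_singleton (S : Set E) {f : StrongDual ℝ E} (hf : f ≠ 0) (c : ℝ) :
    IsFreeOf S (f ⁻¹' {c}) := by
  refine ⟨isClosed_singleton.preimage f.continuous,
    (convex_singleton c).linear_preimage f.toLinearMap, ?_⟩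
  rw [← (f.isOpenMap_of_ne_zero hf).preimage_interior_eq_interior_preimage f.continuous,
    interior_singleton, Set.preimage_empty, Set.empty_inter]

theorem maximal_isFreeOf_preimage_singleton {S : Set E} {f : StrongDual ℝ E} (hf : f ≠ 0)
    (hdense : Dense (f '' S)) (c : ℝ) : Maximal (IsFreeOf S) (f ⁻¹' {c}) := by
  refine ⟨isFreeOf_preimage_singleton S hf c, ?_⟩
  rintro C ⟨-, hconv, hfree⟩ hsub x hx
  by_contra hxc
  have hopen : IsOpen (openSegment ℝ c (f x)) := by
    rw [openSegment_eq_Ioo' (Ne.symm hxc)]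
    exact isOpen_Ioo
  obtain ⟨_, hz, z, hzS, rfl⟩ :=
    hdense.inter_open_nonempty _ hopen ⟨_, midpoint_mem_openSegment ..⟩
  have hslab : f ⁻¹' openSegment ℝ c (f x) ⊆ interior C :=
    interior_maximal (preimage_openSegment_subset_of_convex (f := f.toLinearMap) hconv hsub hx)
      (hopen.preimage f.continuous)
  exact Set.eq_empty_iff_forall_notMem.mp hfree z ⟨hslab hz, hzS⟩

end ContinuousFunctional

theorem stmt_5_general [IsTopologicalAddGroup E] [ContinuousSMul ℝ E] {Λ : AddSubgroup E}
    (hΛ : Submodule.span ℝ (Λ : Set E) = ⊤) {L : Submodule ℝ E} (hL : IsCoatom L)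
    (hclosed : IsClosed (L : Set E)) (hne : L ≠ Submodule.span ℝ ((L : Set E) ∩ Λ)) (a : E) :
    Maximal (IsFreeOf (Λ : Set E)) (a +ᵥ (L : Set E)) := by
  obtain ⟨f, hf, rfl⟩ := exists_ne_zero_ker_eq_of_isCoatom hL
  let F : StrongDual ℝ E := ⟨f, f.continuous_iff_isClosed_ker.mpr hclosed⟩
  have hF : F ≠ 0 := fun h => hf (congrArg ContinuousLinearMap.toLinearMap h)
  rw [vadd_ker_eq_preimage_singleton]
  exact maximal_isFreeOf_preimage_singleton hF (dense_image_of_ker_ne_span hΛ hne) (f a)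

/-- `intLattice d` as an additive subgroup of `ℝ^d`, presented as the range of the coordinatewise
cast so that its carrier is `intLattice d` by definition. -/
def intLatticeAddSubgroup (d : ℕ) : AddSubgroup (Fin d → ℝ) :=
  ((Int.castAddHom ℝ).compLeft (Fin d)).range

theorem coe_intLatticeAddSubgroup (d : ℕ) :
    (intLatticeAddSubgroup d : Set (Fin d → ℝ)) = intLattice d :=
  rfl

theorem span_intLattice (d : ℕ) : Submodule.span ℝ (intLattice d) = ⊤ := by
  rw [eq_top_iff, ← (Pi.basisFun ℝ (Fin d)).span_eq, Submodule.span_le]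
  rintro _ ⟨i, rfl⟩
  refine Submodule.subset_span ⟨Pi.single i 1, ?_⟩
  ext j
  simp [Pi.single_apply]

/-- If `L` is a `(d-1)`-dimensional linear subspace of `ℝ^d` with
`L ≠ span(L ∩ ℤ^d)` and `a ∈ ℝ^d`, then `a + L` is a maximal lattice-free set. -/
theorem stmt_5 (d : ℕ) (L : Submodule ℝ (Fin d → ℝ)) (a : Fin d → ℝ)
    (hL : Module.finrank ℝ L = d - 1)
    (hne : (L : Set (Fin d → ℝ)) ≠
      (Submodule.span ℝ ((L : Set (Fin d → ℝ)) ∩ intLattice d) :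
        Set (Fin d → ℝ))) :
    IsMaxLatticeFree d ((fun x => a + x) '' (L : Set (Fin d → ℝ))) := by
  have hL_ne_top : L ≠ ⊤ := by
    rintro rfl
    simp [span_intLattice] at hne
  have hL_coatom : IsCoatom L :=
    isCoatom_of_finrank_le hL_ne_top (by rw [hL, Module.finrank_fin_fun]; omega)
  have hL_closed : IsClosed (L : Set (Fin d → ℝ)) := L.closed_of_finiteDimensional
  rw [← coe_intLatticeAddSubgroup, SetLike.coe_injective.ne_iff] at hne
  rw [isMaxLatticeFree_iff_maximal, ← coe_intLatticeAddSubgroup]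
  exact stmt_5_general (span_intLattice d) hL_coatom hL_closed hne a
end

section
/- Let K ⊆ ℝ^d be a d-dimensional lattice-free set such that L := rec(K) is a linear subspace of ℝ^d, and let M be a linear subspace of ℝ^d with M ⊆ cl(ℤ^d + L), where cl denotes topological closure. Then K + M is lattice-free. -/
open Pointwise

/-!
Since `K` is closed and convex, its asymptotic cone lies in `rec(K) = L`, so slicing `K` by a
complement of `L` gives a compact `C` with `C + L = K`. Hence `K + M = C + (L + M)` is closed, as
the sum of a compact set and a subspace. Moreover `int (K + M) = int K + M`. Replacing `M` by
`cl(ℤ^d + L)`, the closure can be dropped because `int K` is open, and `L` is absorbed by `int K`: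
this leaves `int (K + M) ⊆ int K + ℤ^d`, which misses the group `ℤ^d` because `int K` does.
-/

theorem disjoint_add_addSubgroup {G : Type*} [AddGroup G] {s : Set G} {Λ : AddSubgroup G}
    (h : Disjoint s Λ) : Disjoint (s + (Λ : Set G)) Λ := by
  rw [Set.disjoint_left] at h ⊢
  rintro _ ⟨x, hx, w, hw, rfl⟩ hxw
  exact h hx ((Λ.add_mem_cancel_right hw).mp hxw)

theorem interior_add_subset_interior_of_add_subset {G : Type*} [AddGroup G] [TopologicalSpace G]
    [ContinuousAdd G] {K L : Set G} (hKL : K + L ⊆ K) : interior K + L ⊆ interior K :=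
  subset_interior_add_left.trans (interior_mono hKL)

section InteriorOfSum

variable {𝕜 E : Type*} [Field 𝕜] [LinearOrder 𝕜] [IsStrictOrderedRing 𝕜] [TopologicalSpace 𝕜]
  [OrderTopology 𝕜] [AddCommGroup E] [Module 𝕜 E] [TopologicalSpace E] [IsTopologicalAddGroup E]
  [ContinuousSMul 𝕜 E]

theorem interior_closure_eq_of_convex_of_isOpen {U : Set E} (hU : Convex 𝕜 U) (hUo : IsOpen U) :
    interior (closure U) = U := by
  rcases U.eq_empty_or_nonempty with rfl | hne
  · simp
  · simpa only [hUo.interior_eq] using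
      hU.interior_closure_eq_interior_of_nonempty_interior (by rwa [hUo.interior_eq])

variable {K M : Set E}

theorem interior_add_eq_interior_add_of_convex (hK : Convex 𝕜 K) (hKi : (interior K).Nonempty)
    (hM : Convex 𝕜 M) : interior (K + M) = interior K + M := by
  refine Set.Subset.antisymm ?_ subset_interior_add_left
  have hdense : K + M ⊆ closure (interior K + M) := by
    rintro _ ⟨x, hx, m, hm, rfl⟩
    have hx' : x ∈ closure (interior K) :=
      hK.closure_interior_eq_closure_of_nonempty_interior hKi ▸ subset_closure hx
    exact map_mem_closure (f := (· + m)) (by fun_prop) hx' fun y hy => Set.add_mem_add hy hm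
  calc interior (K + M) ⊆ interior (closure (interior K + M)) := interior_mono hdense
    _ = interior K + M :=
      interior_closure_eq_of_convex_of_isOpen (hK.interior.add hM) isOpen_interior.add_right

theorem interior_add_subset_interior_add_of_subset_closure {L Λ : Set E} (hK : Convex 𝕜 K)
    (hKi : (interior K).Nonempty) (hKL : K + L ⊆ K) (hM : Convex 𝕜 M)
    (hMΛ : M ⊆ closure (Λ + L)) : interior (K + M) ⊆ interior K + Λ :=
  calc interior (K + M) = interior K + M := interior_add_eq_interior_add_of_convex hK hKi hM
    _ ⊆ interior K + closure (Λ + L) := Set.add_subset_add_left hMΛ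
    _ = interior K + (Λ + L) := isOpen_interior.add_closure _
    _ = interior K + L + Λ := by rw [add_comm Λ, add_assoc]
    _ ⊆ interior K + Λ :=
      Set.add_subset_add_right (interior_add_subset_interior_of_add_subset hKL)

end InteriorOfSum

theorem inter_add_eq_of_codisjoint {R E : Type*} [Ring R] [AddCommGroup E] [Module R E]
    {K : Set E} {L N : Submodule R E} (hLN : Codisjoint L N) (hKL : K + (L : Set E) ⊆ K) :
    K ∩ N + L = K := by
  refine Set.Subset.antisymm
    ((Set.add_subset_add_right Set.inter_subset_left).trans hKL) fun x hx => ?_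
  obtain ⟨l, n, hl, hn, rfl⟩ := Submodule.codisjoint_iff_exists_add_eq.mp hLN x
  have hnK : n ∈ K := by simpa using hKL (Set.add_mem_add hx (L.neg_mem hl))
  exact ⟨n, ⟨hnK, hn⟩, l, hl, add_comm n l⟩

theorem isBounded_inter_of_asymptoticCone_inter_subset {V P : Type*} [NormedAddCommGroup V]
    [NormedSpace ℝ V] [FiniteDimensional ℝ V] [MetricSpace P] [NormedAddTorsor V P] {s t : Set P}
    (h : asymptoticCone ℝ s ∩ asymptoticCone ℝ t ⊆ {0}) : Bornology.IsBounded (s ∩ t) :=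
  isBounded_iff_asymptoticCone_subset_singleton.mpr <|
    (Set.subset_inter (asymptoticCone_mono Set.inter_subset_left)
      (asymptoticCone_mono Set.inter_subset_right)).trans h

section ClosednessOfSum

variable {E : Type*} [NormedAddCommGroup E] [NormedSpace ℝ E] [FiniteDimensional ℝ E]

theorem exists_isCompact_add_eq_of_asymptoticCone_subset {K : Set E} {L : Submodule ℝ E}
    (hK : IsClosed K) (hKL : K + (L : Set E) ⊆ K) (hcone : asymptoticCone ℝ K ⊆ L) :
    ∃ C : Set E, IsCompact C ∧ C + L = K := by
  obtain ⟨N, hLN⟩ := L.exists_isCompl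
  have hN : IsClosed (N : Set E) := N.closed_of_finiteDimensional
  refine ⟨K ∩ N, Metric.isCompact_of_isClosed_isBounded (hK.inter hN) ?_,
    inter_add_eq_of_codisjoint hLN.codisjoint hKL⟩
  apply isBounded_inter_of_asymptoticCone_inter_subset
  rw [asymptoticCone_submodule, hN.closure_eq]
  exact fun v hv => Submodule.disjoint_def.mp hLN.disjoint v (hcone hv.1) hv.2

theorem isClosed_add_submodule_of_asymptoticCone_subset {K : Set E} {L : Submodule ℝ E}
    (hK : IsClosed K) (hKL : K + (L : Set E) ⊆ K) (hcone : asymptoticCone ℝ K ⊆ L)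
    (M : Submodule ℝ E) : IsClosed (K + (M : Set E)) := by
  obtain ⟨C, hC, rfl⟩ := exists_isCompact_add_eq_of_asymptoticCone_subset hK hKL hcone
  rw [add_assoc, ← Submodule.coe_sup]
  exact (L ⊔ M).closed_of_finiteDimensional.add_left_of_isCompact hC

end ClosednessOfSum

theorem add_mem_of_mem_asymptoticCone {𝕜 E : Type*} [Field 𝕜] [LinearOrder 𝕜]
    [IsStrictOrderedRing 𝕜] [TopologicalSpace 𝕜] [OrderTopology 𝕜] [AddCommGroup E] [Module 𝕜 E]
    [TopologicalSpace E] [IsTopologicalAddGroup E] [ContinuousSMul 𝕜 E] {K : Set E} {u x : E}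
    (hK : Convex 𝕜 K) (hKc : IsClosed K) (hu : u ∈ asymptoticCone 𝕜 K) (hx : x ∈ K) :
    x + u ∈ K := by
  simpa only [one_smul, vadd_eq_add, add_comm] using
    hK.smul_vadd_mem_of_isClosed_of_mem_asymptoticCone hKc zero_le_one hu hx

theorem stmt_10_general {E : Type*} [NormedAddCommGroup E] [NormedSpace ℝ E]
    [FiniteDimensional ℝ E] {Λ : AddSubgroup E} {K : Set E} {L M : Submodule ℝ E}
    (hKc : IsClosed K) (hK : Convex ℝ K) (hfree : interior K ∩ Λ = ∅)
    (hdim : affineSpan ℝ K = ⊤) (hL : {u | ∀ x ∈ K, x + u ∈ K} = (L : Set E))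
    (hM : (M : Set E) ⊆ closure ((Λ : Set E) + L)) :
    IsClosed (K + (M : Set E)) ∧ Convex ℝ (K + (M : Set E)) ∧
      interior (K + (M : Set E)) ∩ Λ = ∅ := by
  have hKL : K + (L : Set E) ⊆ K :=
    Set.add_subset_iff.mpr fun x hx u hu => hL.superset hu x hx
  have hcone : asymptoticCone ℝ K ⊆ L := fun u hu =>
    hL.subset fun x hx => add_mem_of_mem_asymptoticCone hK hKc hu hx
  have hKi : (interior K).Nonempty := hK.interior_nonempty_iff_affineSpan_eq_top.mpr hdim
  have hint : interior (K + (M : Set E)) ⊆ interior K + Λ :=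
    interior_add_subset_interior_add_of_subset_closure hK hKi hKL M.convex hM
  rw [← Set.disjoint_iff_inter_eq_empty] at hfree ⊢
  exact ⟨isClosed_add_submodule_of_asymptoticCone_subset hKc hKL hcone M, hK.add M.convex,
    (disjoint_add_addSubgroup hfree).mono_left hint⟩

/-- If `K ⊆ ℝ^d` is `d`-dimensional and lattice-free with
`rec(K) = L` a linear subspace, and `M` is a linear subspace contained in
`cl(ℤ^d + L)`, then `K + M` is lattice-free. -/
theorem stmt_10 (d : ℕ) (K : Set (Fin d → ℝ)) (L M : Submodule ℝ (Fin d → ℝ))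
    (hK : IsLatticeFree d K) (hdim : affineSpan ℝ K = ⊤)
    (hL : recCone d K = (L : Set (Fin d → ℝ)))
    (hM : (M : Set (Fin d → ℝ)) ⊆
      closure (intLattice d + (L : Set (Fin d → ℝ)))) :
    IsLatticeFree d (K + (M : Set (Fin d → ℝ))) :=
  stmt_10_general (Λ := ((Int.castAddHom ℝ).compLeft (Fin d)).range) hK.1 hK.2.1 hK.2.2 hdim hL hM
end

section
/- Let K ⊆ ℝ^d be a d-dimensional lattice-free set such that L := rec(K) is a linear subspace of ℝ^d. Then the interior of K is disjoint from cl(ℤ^d + L), the topological closure of the set ℤ^d + L. -/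
open Pointwise

section Translates

variable {G : Type*} [AddGroup G]

theorem disjoint_add_right_of_sub_subset {s t u : Set G} (hs : s - u ⊆ s) (h : Disjoint s t) :
    Disjoint s (t + u) := by
  rw [Set.disjoint_left] at h ⊢
  rintro _ hx ⟨z, hz, l, hl, rfl⟩
  exact h (hs ⟨z + l, hx, l, hl, add_sub_cancel_right z l⟩) hz

theorem stmt_11_general [TopologicalSpace G] [IsTopologicalAddGroup G] {K Λ L : Set G}
    (hL : K - L ⊆ K) (hΛ : Disjoint (interior K) Λ) :
    Disjoint (interior K) (closure (Λ + L)) := by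
  have interior_sub_subset : interior K - L ⊆ interior K :=
    subset_interior_sub_left.trans (interior_mono hL)
  exact (disjoint_add_right_of_sub_subset interior_sub_subset hΛ).closure_right isOpen_interior

end Translates

theorem add_subset_iff_subset_recCone {d : ℕ} {K s : Set (Fin d → ℝ)} :
    K + s ⊆ K ↔ s ⊆ recCone d K :=
  Set.add_subset_iff.trans forall₂_comm

/-- If `K ⊆ ℝ^d` is `d`-dimensional and lattice-free with
`rec(K) = L` a linear subspace, then `interior K` is disjoint from
`cl(ℤ^d + L)`. -/
theorem stmt_11 (d : ℕ) (K : Set (Fin d → ℝ)) (L : Submodule ℝ (Fin d → ℝ))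
    (hK : IsLatticeFree d K) (hdim : affineSpan ℝ K = ⊤)
    (hL : recCone d K = (L : Set (Fin d → ℝ))) :
    interior K ∩ closure (intLattice d + (L : Set (Fin d → ℝ))) = ∅ := by
  have sub_subset : K - (L : Set (Fin d → ℝ)) ⊆ K := by
    rw [sub_eq_add_neg, neg_coe_set]
    exact add_subset_iff_subset_recCone.2 hL.ge
  exact (stmt_11_general sub_subset (Set.disjoint_iff_inter_eq_empty.2 hK.2.2)).inter_eq
end

section
/- Let L ⊆ ℝ^d be a linear subspace such that L ≠ span(ℤ^d ∩ L). Then there exists a line l through the origin (i.e., a one-dimensional linear subspace l = ℝ·a for some nonzero a ∈ ℝ^d) satisfying l ⊆ cl(ℤ^d + L) and l ⊄ L, where cl denotes topological closure. -/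
open Pointwise

/-!
Project `Λ = ℤ^d` to `ℝ^d ⧸ L`. If the image is discrete, a `ℤ`-basis of it is linearly independent
over `ℝ`; lifting that basis to `Λ` splits `Λ` into the lift and `Λ ∩ L`, and since the lift is
transversal to `L`, the points of `Λ ∩ L` must span `L`. Otherwise the image contains arbitrarily
short nonzero vectors, and the integer multiples of such vectors fill up a line in its closure, in
a limiting direction. As the projection is open, every lift `a` of a direction vector of that line
satisfies `ℝ a ⊆ cl (Λ + L)`.
-/

open Filter Module Submodule Topology

theorem neBot_nhdsNE_zero_inf_of_not_discreteTopology {G : Type*} [AddGroup G]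
    [TopologicalSpace G] [IsTopologicalAddGroup G] (H : AddSubgroup G)
    (hH : ¬ DiscreteTopology H) : (𝓝[≠] (0 : G) ⊓ 𝓟 (H : Set G)).NeBot := by
  rwa [discreteTopology_iff_isOpen_singleton_zero, isOpen_singleton_iff_punctured_nhds,
    ← ne_eq, ← neBot_iff, nhds_ne_subtype_neBot_iff] at hH

section FiniteDimensional

variable {F : Type*} [NormedAddCommGroup F] [NormedSpace ℝ F] [FiniteDimensional ℝ F]

theorem exists_forall_smul_mem_closure_of_not_discreteTopology (H : AddSubgroup F)
    (hH : ¬ DiscreteTopology H) : ∃ u ≠ (0 : F), ∀ t : ℝ, t • u ∈ closure (H : Set F) := by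
  have : ProperSpace F := FiniteDimensional.proper ℝ F
  have := neBot_nhdsNE_zero_inf_of_not_discreteTopology H hH
  let l : Ultrafilter F := .of (𝓝[≠] 0 ⊓ 𝓟 H)
  have hl : (l : Filter F) ≤ 𝓝[≠] 0 ⊓ 𝓟 H := Ultrafilter.of_le _
  have hne : ∀ᶠ x in (l : Filter F), x ≠ 0 := hl (mem_inf_of_left self_mem_nhdsWithin)
  have hmem : ∀ᶠ x in (l : Filter F), x ∈ H := hl (mem_inf_of_right (mem_principal_self _))
  have hsphere : ∀ᶠ x in (l : Filter F), ‖x‖⁻¹ • x ∈ Metric.sphere (0 : F) 1 := by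
    filter_upwards [hne] with x hx
    simp [norm_smul, hx]
  obtain ⟨u, hu, hlim⟩ := (isCompact_sphere (0 : F) 1).ultrafilter_le_nhds
    (l.map fun x ↦ ‖x‖⁻¹ • x) (le_principal_iff.2 hsphere)
  refine ⟨u, ne_zero_of_mem_unit_sphere ⟨u, hu⟩, fun t ↦ ?_⟩
  wlog ht : 0 ≤ t generalizing t
  · have hneg : (-t) • u ∈ H.topologicalClosure := this (-t) (by linarith)
    simpa only [neg_smul, neg_neg] using! H.topologicalClosure.neg_mem hneg
  have hnorm : Tendsto (fun x : F ↦ ‖x‖⁻¹) l atTop :=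
    tendsto_inv_nhdsGT_zero.comp (tendsto_norm_nhdsNE_zero.mono_left (hl.trans inf_le_left))
  -- The multiples `⌊t / ‖x‖⌋₊ • x` stay in `H` and tend to `t • u` along `l`.
  refine mem_closure_of_tendsto
    (((tendsto_nat_floor_mul_div_atTop ht).comp hnorm).smul hlim) ?_
  filter_upwards [hne, hmem] with x hx hxH
  have hmul : ((⌊t * ‖x‖⁻¹⌋₊ : ℝ) / ‖x‖⁻¹) • ‖x‖⁻¹ • x = ⌊t * ‖x‖⁻¹⌋₊ • x := by
    rw [smul_smul, div_mul_cancel₀ _ (inv_ne_zero (norm_ne_zero_iff.2 hx)),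
      Nat.cast_smul_eq_nsmul]
  simpa only [Function.comp_apply, hmul] using! H.nsmul_mem hxH _

theorem linearIndependent_real_of_discreteTopology_span_int {ι : Type*} {v : ι → F}
    (hv : LinearIndependent ℤ v) (hd : DiscreteTopology (span ℤ (Set.range v))) :
    LinearIndependent ℝ v := by
  have : Finite ι := Module.Finite.finite_basis (Basis.span hv)
  have := Fintype.ofFinite ι
  rw [linearIndependent_iff_card_eq_finrank_span, Real.finrank_eq_int_finrank_of_discrete hd]
  exact linearIndependent_iff_card_eq_finrank_span.1 hv

theorem exists_linearIndependent_real_span_int_eq (Γ : Submodule ℤ F) [hΓ : DiscreteTopology Γ] :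
    ∃ (n : ℕ) (v : Fin n → F), LinearIndependent ℝ v ∧ span ℤ (Set.range v) = Γ := by
  let b := finBasis ℤ Γ
  have hspan : span ℤ (Set.range (Γ.subtype ∘ b)) = Γ := by
    rw [Set.range_comp, span_image, b.span_eq, map_subtype_top]
  exact ⟨_, Γ.subtype ∘ b, linearIndependent_real_of_discreteTopology_span_int
    (b.linearIndependent.map' _ Γ.ker_subtype) (hspan.symm ▸ hΓ), hspan⟩

theorem span_inter_ker_eq_of_linearIndependent_comp {R E F ι : Type*} [Ring R] [AddCommGroup E]
    [Module R E] [AddCommGroup F] [Module R F] (f : E →ₗ[R] F) {Λ : Submodule ℤ E} {w : ι → E}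
    (hwΛ : ∀ i, w i ∈ Λ) (hw : LinearIndependent R (f ∘ w))
    (hspan : ∀ x ∈ Λ, f x ∈ span ℤ (Set.range (f ∘ w))) :
    span R ((Λ : Set E) ∩ f.ker) = span R (Λ : Set E) ⊓ f.ker := by
  have hker : span R ((Λ : Set E) ∩ f.ker) ≤ f.ker := span_le.2 Set.inter_subset_right
  have hle : span R (Λ : Set E) ≤ span R ((Λ : Set E) ∩ f.ker) ⊔ span R (Set.range w) := by
    refine span_le.2 fun x hx ↦ ?_
    obtain ⟨y, hy, hyx⟩ : f x ∈ (span ℤ (Set.range w)).map (f.restrictScalars ℤ) := by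
      rw [map_span, ← Set.range_comp]
      exact hspan x hx
    have hyΛ : y ∈ Λ := span_le.2 (Set.range_subset_iff.2 hwΛ) hy
    have hxy : x - y ∈ (Λ : Set E) ∩ f.ker :=
      ⟨Λ.sub_mem hx hyΛ, LinearMap.sub_mem_ker_iff.2 hyx.symm⟩
    rw [← sub_add_cancel x y]
    exact add_mem_sup (subset_span hxy) (span_subset_span ℤ R _ hy)
  refine le_antisymm (le_inf (span_mono Set.inter_subset_left) hker) ?_
  calc span R (Λ : Set E) ⊓ f.ker
      ≤ (span R ((Λ : Set E) ∩ f.ker) ⊔ span R (Set.range w)) ⊓ f.ker := by gcongr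
    _ = span R ((Λ : Set E) ∩ f.ker) ⊔ span R (Set.range w) ⊓ f.ker := sup_inf_assoc_of_le _ hker
    _ = span R ((Λ : Set E) ∩ f.ker) := by rw [(range_ker_disjoint hw).eq_bot, sup_bot_eq]

theorem span_inter_ker_eq_of_discreteTopology_map {E : Type*} [AddCommGroup E] [Module ℝ E]
    (f : E →ₗ[ℝ] F) (Λ : Submodule ℤ E) [DiscreteTopology (Λ.map (f.restrictScalars ℤ))] :
    span ℝ ((Λ : Set E) ∩ f.ker) = span ℝ (Λ : Set E) ⊓ f.ker := by
  obtain ⟨n, v, hv, hspan⟩ :=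
    exists_linearIndependent_real_span_int_eq (Λ.map (f.restrictScalars ℤ))
  have hlift (i : Fin n) : ∃ x ∈ Λ, f x = v i := hspan.le (subset_span (Set.mem_range_self i))
  choose w hwΛ hfw using hlift
  obtain rfl : f ∘ w = v := funext hfw
  exact span_inter_ker_eq_of_linearIndependent_comp f hwΛ hv
    fun x hx ↦ hspan.ge (mem_map_of_mem hx)

end FiniteDimensional

theorem stmt_12_general {E : Type*} [NormedAddCommGroup E] [NormedSpace ℝ E] (Λ : Submodule ℤ E)
    (L : Submodule ℝ E) [IsClosed (L : Set E)] [FiniteDimensional ℝ (E ⧸ L)]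
    (hLΛ : L ≤ span ℝ (Λ : Set E)) (hL : L ≠ span ℝ ((Λ : Set E) ∩ L)) :
    ∃ a ∉ L, ∀ t : ℝ, t • a ∈ closure ((Λ : Set E) + (L : Set E)) := by
  have hnd : ¬ DiscreteTopology (Λ.map (L.mkQ.restrictScalars ℤ)) := fun _ ↦ hL <| by
    simpa [inf_eq_right.2 hLΛ] using (span_inter_ker_eq_of_discreteTopology_map L.mkQ Λ).symm
  obtain ⟨u, hu, hline⟩ := exists_forall_smul_mem_closure_of_not_discreteTopology
    (Λ.map (L.mkQ.restrictScalars ℤ)).toAddSubgroup hnd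
  obtain ⟨a, rfl⟩ := L.mkQ_surjective u
  have hpre : L.mkQ ⁻¹' (L.mkQ '' Λ) = (Λ : Set E) + (L : Set E) :=
    QuotientAddGroup.preimage_image_mk_eq_add L.toAddSubgroup Λ
  refine ⟨a, by simpa using hu, fun t ↦ ?_⟩
  rw [← hpre, ← L.isOpenMap_mkQ.preimage_closure_eq_closure_preimage continuous_quot_mk]
  simpa using hline t

theorem coe_span_int_basisFun (d : ℕ) :
    (span ℤ (Set.range (Pi.basisFun ℝ (Fin d))) : Set (Fin d → ℝ)) = intLattice d := by
  ext x
  simp [intLattice, Basis.mem_span_iff_repr_mem, funext_iff, Classical.skolem]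

/-- If `L ⊆ ℝ^d` is a linear subspace with `L ≠ span(ℤ^d ∩ L)`,
then there is a line `l = ℝ·a` through the origin with `l ⊆ cl(ℤ^d + L)` and
`l ⊄ L`. -/
theorem stmt_12 (d : ℕ) (L : Submodule ℝ (Fin d → ℝ))
    (hL : (L : Set (Fin d → ℝ)) ≠
      (Submodule.span ℝ (intLattice d ∩ (L : Set (Fin d → ℝ))) :
        Set (Fin d → ℝ))) :
    ∃ a : Fin d → ℝ, a ≠ 0 ∧
      (∀ t : ℝ, t • a ∈ closure (intLattice d + (L : Set (Fin d → ℝ)))) ∧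
      a ∉ L := by
  have : IsClosed (L : Set (Fin d → ℝ)) := L.closed_of_finiteDimensional
  rw [← coe_span_int_basisFun, Ne, SetLike.coe_set_eq] at hL
  obtain ⟨a, haL, ha⟩ := stmt_12_general _ L (by simp) hL
  exact ⟨a, ne_of_mem_of_not_mem L.zero_mem haL |>.symm, coe_span_int_basisFun d ▸ ha, haL⟩
end
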